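/- Let k and t be positive integers with k ≥ 4. There exists n₀ = n₀(k,t) such that for all integers n ≥ n₀: if F ⊆ binom([n],k) contains no copy of the k-uniform linear path P^{(k)}_{2t+2} and |F| = C(n−1,k−1) + C(n−2,k−1) + … + C(n−t,k−1) + C(n−t−2,k−2), then there exist a set S ⊆ [n] with |S| = t and two distinct elements u,v ∈ [n]∖S such that F consists of exactly all k-subsets of [n] that intersect S together with all k-subsets of [n]∖S that contain both u and v. -/

import Mathlib

open Finset

set_option linter.unusedSectionVars false
set_option linter.unusedVariables false

/-- The family `F` of k-sets contains a k-uniform linear path of length ℓ. -/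
def ContainsLinearPath (k ℓ : ℕ) {n : ℕ} (F : Finset (Finset (Fin n))) : Prop :=
  ∃ P : Fin ℓ → Finset (Fin n), Function.Injective P ∧
    (∀ i, P i ∈ F) ∧ (∀ i, (P i).card = k) ∧
    (∀ i j : Fin ℓ, (i : ℕ) + 1 = (j : ℕ) → (P i ∩ P j).card = 1) ∧
    (∀ i j : Fin ℓ, (i : ℕ) + 1 < (j : ℕ) → P i ∩ P j = ∅)

/-- `U` is a `w`-kernel of `F`. -/
def Ker {α : Type} [DecidableEq α] (w : ℕ) (F : Finset (Finset α)) (U : Finset α) : Prop :=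
  ∀ W : Finset α, W.card ≤ w → ∃ E ∈ F, U ⊆ E ∧ Disjoint (E \ U) W

/-- restriction of `E` to the colours outside `T`. -/
def rs {α : Type} {k : ℕ} (χ : α → Fin k) (E : Finset α) (T : Finset (Fin k)) : Finset α :=
  E.filter (fun x => χ x ∉ T)

section hom
variable {α : Type} [DecidableEq α]

lemma Ker.mono {w : ℕ} {F G : Finset (Finset α)} {U : Finset α} (h : Ker w F U) (hFG : F ⊆ G) :
    Ker w G U := by
  intro W hW
  obtain ⟨E, hE, h1⟩ := h W hW
  exact ⟨E, hFG hE, h1⟩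

lemma Ker.of_mem {w : ℕ} {F : Finset (Finset α)} {U : Finset α} (h : U ∈ F) : Ker w F U := by
  intro W _
  exact ⟨U, h, Subset.refl _, by simp⟩

lemma rs_subset {k : ℕ} (χ : α → Fin k) (E : Finset α) (T : Finset (Fin k)) : rs χ E T ⊆ E :=
  filter_subset _ _

lemma mem_rs {k : ℕ} {χ : α → Fin k} {E : Finset α} {T : Finset (Fin k)} {x : α} :
    x ∈ rs χ E T ↔ x ∈ E ∧ χ x ∉ T := by simp [rs]

lemma rainbow_surj {k : ℕ} {χ : α → Fin k} {E : Finset α} (hc : E.card = k)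
    (hi : Set.InjOn χ (E : Set α)) (c : Fin k) : ∃ x ∈ E, χ x = c := by
  have h1 : (E.image χ).card = k := by rw [card_image_of_injOn hi, hc]
  have h2 : E.image χ = univ := by
    apply eq_univ_of_card; simpa using h1
  have : c ∈ E.image χ := by rw [h2]; simp
  simpa using this

/-- in rainbow families, containing the restriction means having the same restriction. -/
lemma rs_eq_of_subset {k : ℕ} {χ : α → Fin k} {E E' : Finset α} {T : Finset (Fin k)}
    (hc : E.card = k) (hi : Set.InjOn χ (E : Set α))
    (hi' : Set.InjOn χ (E' : Set α)) (h : rs χ E T ⊆ E') : rs χ E' T = rs χ E T := by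
  ext x
  constructor
  · intro hx
    rw [mem_rs] at hx
    obtain ⟨y, hy, hyx⟩ := rainbow_surj hc hi (χ x)
    have hy' : y ∈ rs χ E T := mem_rs.2 ⟨hy, by rw [hyx]; exact hx.2⟩
    have : y = x := hi' (h hy') hx.1 hyx
    rw [← this]; exact hy'
  · intro hx
    exact mem_rs.2 ⟨h hx, (mem_rs.1 hx).2⟩

lemma card_rainbow [Fintype α] (k : ℕ) (E : Finset α) (hE : E.card = k) :
    Fintype.card (α → Fin k) ≤
      k ^ k * (univ.filter (fun χ : α → Fin k => Set.InjOn χ (E : Set α))).card := by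
  classical
  have e : E ≃ Fin k := Fintype.equivFinOfCardEq (by simpa using hE)
  let f : (α → Fin k) → (E → Fin k) × (α → Fin k) := fun χ =>
    (fun y => χ y, fun x => if h : x ∈ E then e ⟨x, h⟩ else χ x)
  have h1 : (univ : Finset (α → Fin k)).card ≤ ((univ : Finset (E → Fin k)) ×ˢ
      (univ.filter (fun χ : α → Fin k => Set.InjOn χ (E : Set α)))).card := by
    apply Finset.card_le_card_of_injOn f
    · intro χ _
      simp only [f, coe_product, coe_univ, Set.mem_prod, Set.mem_univ, true_and, coe_filter,
        mem_univ, Set.mem_ofPred_eq]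
      intro x hx y hy hxy
      have hx' : x ∈ E := hx
      have hy' : y ∈ E := hy
      simp only [hx', hy', dif_pos] at hxy
      have := e.injective hxy
      simpa using this
    · intro χ _ χ' _ h
      simp only [f, Prod.mk.injEq] at h
      funext x
      by_cases hx : x ∈ E
      · exact congrFun h.1 ⟨x, hx⟩
      · have := congrFun h.2 x
        simpa [hx] using this
  rw [card_product] at h1
  have h2 : (univ : Finset (E → Fin k)).card = k ^ k := by
    rw [card_univ, Fintype.card_fun]; simp [hE]
  rw [h2] at h1
  simpa using h1

lemma exists_rainbow [Fintype α] (k : ℕ) (hk : 0 < k) (Q : Finset (Finset α))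
    (hQ : ∀ E ∈ Q, E.card = k) :
    ∃ (χ : α → Fin k) (G : Finset (Finset α)), G ⊆ Q ∧ (∀ E ∈ G, Set.InjOn χ (E : Set α)) ∧
      Q.card ≤ k ^ k * G.card := by
  classical
  have : Nonempty (Fin k) := ⟨⟨0, hk⟩⟩
  by_contra hcon
  push Not at hcon
  have h1 : ∀ χ : α → Fin k,
      k ^ k * (Q.filter (fun E : Finset α => Set.InjOn χ (E : Set α))).card < Q.card := by
    intro χ
    apply hcon χ _ (filter_subset _ _)
    intro E hE; exact (mem_filter.1 hE).2
  have h2 : ∑ χ : α → Fin k, k ^ k * (Q.filter (fun E : Finset α => Set.InjOn χ (E : Set α))).card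
      < ∑ χ : α → Fin k, Q.card :=
    sum_lt_sum_of_nonempty univ_nonempty (fun χ _ => h1 χ)
  rw [← mul_sum, sum_const, card_univ, smul_eq_mul] at h2
  have h3 : ∑ χ : α → Fin k, (Q.filter (fun E : Finset α => Set.InjOn χ (E : Set α))).card
      = ∑ E ∈ Q, (univ.filter (fun χ : α → Fin k => Set.InjOn χ (E : Set α))).card := by
    simp only [card_filter]
    rw [sum_comm]
  rw [h3, mul_sum] at h2
  have h4 : ∑ E ∈ Q, Fintype.card (α → Fin k) ≤
      ∑ E ∈ Q, k ^ k * (univ.filter (fun χ : α → Fin k => Set.InjOn χ (E : Set α))).card :=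
    sum_le_sum (fun E hE => card_rainbow k E (hQ E hE))
  rw [sum_const, smul_eq_mul] at h4
  have := mul_comm Q.card (Fintype.card (α → Fin k))
  omega

lemma peel {k : ℕ} (w : ℕ) (χ : α → Fin k) (A : Finset (Finset (Fin k))) :
    ∀ (m : ℕ) (G : Finset (Finset α)), G.card = m → (∀ E ∈ G, E.card = k) →
      (∀ E ∈ G, Set.InjOn χ (E : Set α)) →
      ∃ (H : Finset (Finset α)) (ρ : Finset α → Finset (Fin k)), H ⊆ G ∧
        (∀ E ∈ H, ∀ T ∈ A, Ker w H (rs χ E T)) ∧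
        (∀ E ∈ G \ H, ρ E ∈ A) ∧
        (∀ T, ∀ E ∈ (G \ H).filter (fun E => ρ E = T),
          ¬ Ker w ((G \ H).filter (fun E => ρ E = T)) (rs χ E T)) := by
  classical
  intro m
  induction m with
  | zero =>
    intro G hG _ _
    rw [card_eq_zero] at hG
    subst hG
    exact ⟨∅, fun _ => ∅, by simp, by simp, by simp, by simp⟩
  | succ m ih =>
    intro G hG hc hi
    by_cases hgood : ∀ E ∈ G, ∀ T ∈ A, Ker w G (rs χ E T)
    · exact ⟨G, fun _ => ∅, Subset.refl _, hgood, by simp, by simp⟩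
    push Not at hgood
    obtain ⟨E0, hE0, T0, hT0, hK⟩ := hgood
    obtain ⟨H, ρ, hH, h1, h2, h3⟩ := ih (G.erase E0) (by rw [card_erase_of_mem hE0]; omega)
      (fun E hE => hc E (mem_of_mem_erase hE)) (fun E hE => hi E (mem_of_mem_erase hE))
    have hE0H : E0 ∉ H := fun h => by simpa using hH h
    refine ⟨H, Function.update ρ E0 T0, hH.trans (erase_subset _ _), h1, ?_, ?_⟩
    · intro E hE
      by_cases hEE : E = E0
      · subst hEE; simpa using hT0
      · rw [Function.update_of_ne hEE]
        apply h2
        simp only [mem_sdiff, mem_erase] at hE ⊢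
        exact ⟨⟨hEE, hE.1⟩, hE.2⟩
    · intro T E hE hKer
      have hEG : E ∈ G := (mem_sdiff.1 (mem_filter.1 hE).1).1
      by_cases hcase : T = T0 ∧ rs χ E T ⊆ E0
      · obtain ⟨rfl, hsub⟩ := hcase
        have := rs_eq_of_subset (hc E hEG) (hi E hEG) (hi E0 hE0) hsub
        rw [← this] at hKer
        apply hK
        exact hKer.mono (fun x hx => (mem_sdiff.1 (mem_filter.1 hx).1).1)
      · have hne : E ≠ E0 := by
          rintro rfl
          apply hcase
          have := (mem_filter.1 hE).2
          rw [Function.update_self] at this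
          exact ⟨this.symm, rs_subset _ _ _⟩
        have hmem : ∀ X ∈ (G \ H).filter (fun E => Function.update ρ E0 T0 E = T), X ≠ E0 →
            X ∈ ((G.erase E0) \ H).filter (fun E => ρ E = T) := by
          intro X hX hXne
          simp only [mem_filter, mem_sdiff, mem_erase] at hX ⊢
          rw [Function.update_of_ne hXne] at hX
          exact ⟨⟨⟨hXne, hX.1.1⟩, hX.1.2⟩, hX.2⟩
        apply h3 T E (hmem E hE hne)
        intro W hW
        obtain ⟨X, hX, hX1, hX2⟩ := hKer W hW
        refine ⟨X, hmem X hX ?_, hX1, hX2⟩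
        rintro rfl
        apply hcase
        have := (mem_filter.1 hX).2
        rw [Function.update_self] at this
        exact ⟨this.symm, hX1⟩

lemma hom_aux {k : ℕ} (w : ℕ) (χ : α → Fin k) :
    ∀ (m : ℕ) (A : Finset (Finset (Fin k))), A.card = m → ∀ G : Finset (Finset α),
      (∀ E ∈ G, E.card = k) → (∀ E ∈ G, Set.InjOn χ (E : Set α)) →
      (∀ E ∈ G, ∀ T ∉ A, ¬ Ker w G (rs χ E T)) →
      ∃ (H : Finset (Finset α)) (A' : Finset (Finset (Fin k))), H ⊆ G ∧
        G.card ≤ (2 ^ 2 ^ k) ^ m * H.card ∧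
        (∀ E ∈ H, ∀ T, T ∈ A' ↔ Ker w H (rs χ E T)) := by
  classical
  intro m
  induction m with
  | zero =>
    intro A hA G hc hi hd
    rw [card_eq_zero] at hA
    subst hA
    refine ⟨G, ∅, Subset.refl _, by simp, ?_⟩
    intro E hE T
    simp [hd E hE T]
  | succ m ih =>
    intro A hA G hc hi hd
    obtain ⟨H, ρ, hH, h1, h2, h3⟩ := peel w χ A _ G rfl hc hi
    have hAc : A.card + 1 ≤ 2 ^ 2 ^ k := by
      have : A.card ≤ 2 ^ k := by
        have := card_le_univ A
        simpa using this
      have h' : 2 ^ k < 2 ^ 2 ^ k := Nat.lt_two_pow_self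
      omega
    by_cases hbig : G.card ≤ 2 ^ 2 ^ k * H.card
    · refine ⟨H, A, hH, ?_, ?_⟩
      · refine hbig.trans (Nat.mul_le_mul_right _ ?_)
        exact Nat.le_self_pow (by omega) _
      · intro E hE T
        refine ⟨fun hT => h1 E hE T hT, fun hK => ?_⟩
        by_contra hT
        exact hd E (hH hE) T hT (hK.mono hH)
    · have hsplit : (G \ H).card =
          ∑ T ∈ A, ((G \ H).filter (fun E => ρ E = T)).card :=
        card_eq_sum_card_fiberwise (fun E hE => h2 E hE)
      have hex : ∃ T ∈ A, G.card ≤ 2 ^ 2 ^ k * ((G \ H).filter (fun E => ρ E = T)).card := by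
        by_contra hno
        push Not at hno
        have hGH : (G \ H).card + H.card = G.card := card_sdiff_add_card_eq_card hH
        have hs : ∑ T ∈ A, 2 ^ 2 ^ k * ((G \ H).filter (fun E => ρ E = T)).card
            ≤ ∑ T ∈ A, G.card := sum_le_sum (fun T hT => (hno T hT).le)
        rw [← mul_sum, ← hsplit, sum_const, smul_eq_mul] at hs
        push Not at hbig
        have : 2 ^ 2 ^ k * G.card < (A.card + 1) * G.card := by
          rw [← hGH, mul_add, hGH, add_mul, one_mul]
          omega
        have := Nat.lt_of_mul_lt_mul_right this
        omega
      obtain ⟨T, hT, hTc⟩ := hex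
      set R := (G \ H).filter (fun E => ρ E = T) with hR
      have hRG : R ⊆ G := fun x hx => (mem_sdiff.1 (mem_filter.1 hx).1).1
      obtain ⟨H', A', hH', hcard, hiff⟩ := ih (A.erase T) (by rw [card_erase_of_mem hT]; omega) R
        (fun E hE => hc E (hRG hE)) (fun E hE => hi E (hRG hE)) (by
          intro E hE T' hT' hK
          by_cases hTT : T' = T
          · subst hTT; exact h3 T' E hE hK
          · exact hd E (hRG hE) T' (fun h => hT' (mem_erase.2 ⟨hTT, h⟩)) (hK.mono hRG))
      refine ⟨H', A', hH'.trans hRG, ?_, hiff⟩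
      calc G.card ≤ 2 ^ 2 ^ k * R.card := hTc
        _ ≤ 2 ^ 2 ^ k * ((2 ^ 2 ^ k) ^ m * H'.card) := Nat.mul_le_mul_left _ hcard
        _ = _ := by ring

/-- Füredi-type homogeneity lemma. -/
lemma hom_lemma [Fintype α] (k w : ℕ) (hk : 0 < k) (Q : Finset (Finset α))
    (hQ : ∀ E ∈ Q, E.card = k) :
    ∃ (H : Finset (Finset α)) (χ : α → Fin k) (A : Finset (Finset (Fin k))), H ⊆ Q ∧
      Q.card ≤ k ^ k * (2 ^ 2 ^ k) ^ (2 ^ k) * H.card ∧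
      (∀ E ∈ H, Set.InjOn χ (E : Set α)) ∧
      (∀ E ∈ H, ∀ T, T ∈ A ↔ Ker w H (rs χ E T)) := by
  obtain ⟨χ, G, hG, hi, hc⟩ := exists_rainbow k hk Q hQ
  obtain ⟨H, A, hH, hc', hiff⟩ := hom_aux w χ _ (univ : Finset (Finset (Fin k))) rfl G
    (fun E hE => hQ E (hG hE)) hi (by simp)
  have : (univ : Finset (Finset (Fin k))).card = 2 ^ k := by simp
  rw [this] at hc'
  refine ⟨H, χ, A, hH.trans hG, ?_, fun E hE => hi E (hH hE), hiff⟩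
  calc Q.card ≤ k ^ k * G.card := hc
    _ ≤ k ^ k * ((2 ^ 2 ^ k) ^ (2 ^ k) * H.card) := Nat.mul_le_mul_left _ hc'
    _ = _ := by ring

lemma hom_union {k w : ℕ} {H : Finset (Finset α)} {χ : α → Fin k} {A : Finset (Finset (Fin k))}
    (hc : ∀ E ∈ H, E.card = k) (hi : ∀ E ∈ H, Set.InjOn χ (E : Set α))
    (hA : ∀ E ∈ H, ∀ T, T ∈ A ↔ Ker w H (rs χ E T)) (hne : H.Nonempty)
    {T1 T2 : Finset (Fin k)} (h1 : T1 ∈ A) (h2 : T2 ∈ A) : T1 ∪ T2 ∈ A := by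
  obtain ⟨E, hE⟩ := hne
  rw [hA E hE]
  intro W hW
  obtain ⟨E1, hE1, hs1, hd1⟩ := (hA E hE T1).1 h1 W hW
  obtain ⟨E2, hE2, hs2, hd2⟩ := (hA E1 hE1 T2).1 h2 W hW
  refine ⟨E2, hE2, ?_, ?_⟩
  · intro x hx
    rw [mem_rs, mem_union, not_or] at hx
    apply hs2
    exact mem_rs.2 ⟨hs1 (mem_rs.2 ⟨hx.1, hx.2.1⟩), hx.2.2⟩
  · rw [disjoint_left] at hd1 hd2 ⊢
    intro x hx hxW
    rw [mem_sdiff, mem_rs, mem_union] at hx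
    by_cases hx1 : x ∈ rs χ E1 T2
    · rw [mem_rs] at hx1
      apply hd1 _ hxW
      rw [mem_sdiff, mem_rs]
      refine ⟨hx1.1, fun h => hx.2 ⟨h.1, ?_⟩⟩
      tauto
    · exact hd2 (mem_sdiff.2 ⟨hx.1, hx1⟩) hxW

lemma hom_fiber {k w : ℕ} {H : Finset (Finset α)} {χ : α → Fin k} {A : Finset (Finset (Fin k))}
    (hc : ∀ E ∈ H, E.card = k) (hi : ∀ E ∈ H, Set.InjOn χ (E : Set α))
    (hA : ∀ E ∈ H, ∀ T, T ∈ A ↔ Ker w H (rs χ E T)) :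
    ∀ (m : ℕ) (T : Finset (Fin k)), T.card = m → (∀ T' ⊆ T, T'.Nonempty → T' ∉ A) →
      ∀ E ∈ H, (H.filter (fun X => rs χ E T ⊆ X)).card ≤ w ^ m := by
  intro m
  induction m with
  | zero =>
    intro T hT _ E hE
    rw [card_eq_zero] at hT
    subst hT
    rw [pow_zero, card_le_one]
    have : ∀ X ∈ H.filter (fun X => rs χ E ∅ ⊆ X), X = E := by
      intro X hX
      rw [mem_filter] at hX
      have hs : E ⊆ X := by simpa [rs] using hX.2
      exact (eq_of_subset_of_card_le hs (by rw [hc X hX.1, hc E hE])).symm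
    intro a ha b hb
    rw [this a ha, this b hb]
  | succ m ih =>
    intro T hT hno E hE
    have hTne : T.Nonempty := card_pos.1 (by omega)
    have hnk : ¬ Ker w H (rs χ E T) := fun h => hno T (Subset.refl _) hTne ((hA E hE T).2 h)
    unfold Ker at hnk
    push Not at hnk
    obtain ⟨W, hW, hWE⟩ := hnk
    have hsub : H.filter (fun X => rs χ E T ⊆ X) ⊆
        W.biUnion (fun z => H.filter (fun X => rs χ E T ⊆ X ∧ z ∈ X ∧ z ∉ rs χ E T)) := by
      intro X hX
      rw [mem_filter] at hX
      have := hWE X hX.1 hX.2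
      rw [not_disjoint_iff] at this
      obtain ⟨z, hz, hzW⟩ := this
      rw [mem_sdiff] at hz
      rw [mem_biUnion]
      exact ⟨z, hzW, mem_filter.2 ⟨hX.1, hX.2, hz⟩⟩
    refine (card_le_card hsub).trans ?_
    refine (card_biUnion_le_card_mul _ _ (w ^ m) ?_).trans ?_
    · intro z hz
      rcases (H.filter (fun X => rs χ E T ⊆ X ∧ z ∈ X ∧ z ∉ rs χ E T)).eq_empty_or_nonempty with
        he | ⟨X, hX⟩
      · rw [he]; simp
      · rw [mem_filter] at hX
        obtain ⟨hXH, hX1, hX2, hX3⟩ := hX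
        have hrs := rs_eq_of_subset (hc E hE) (hi E hE) (hi X hXH) hX1
        have hzT : χ z ∈ T := by
          by_contra h
          exact hX3 (hrs ▸ mem_rs.2 ⟨hX2, h⟩)
        have hI := ih (T.erase (χ z)) (by rw [card_erase_of_mem hzT]; omega)
          (fun T' hT' => hno T' (hT'.trans (erase_subset _ _))) X hXH
        refine le_trans (card_le_card ?_) hI
        intro Y hY
        rw [mem_filter] at hY ⊢
        refine ⟨hY.1, fun x hx => ?_⟩
        rw [mem_rs] at hx
        by_cases hxz : χ x = χ z
        · rw [hi X hXH hx.1 hX2 hxz]; exact hY.2.2.1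
        · apply hY.2.1
          rw [← hrs, mem_rs]
          refine ⟨hx.1, fun h => hx.2 (mem_erase.2 ⟨hxz, h⟩)⟩
    · rw [pow_succ, mul_comm]
      exact Nat.mul_le_mul_left _ hW

lemma hom_dense {k w : ℕ} {H : Finset (Finset α)} {χ : α → Fin k} {A : Finset (Finset (Fin k))}
    (V : Finset α) (hV : ∀ E ∈ H, E ⊆ V)
    (hc : ∀ E ∈ H, E.card = k) (hi : ∀ E ∈ H, Set.InjOn χ (E : Set α))
    (hA : ∀ E ∈ H, ∀ T, T ∈ A ↔ Ker w H (rs χ E T))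
    (T : Finset (Fin k)) (hno : ∀ T' ⊆ T, T'.Nonempty → T' ∉ A) :
    H.card ≤ w ^ T.card * V.card ^ (k - T.card) := by
  have hmaps : ∀ E ∈ H, rs χ E T ∈ powersetCard (k - T.card) V := by
    intro E hE
    rw [mem_powersetCard]
    refine ⟨(rs_subset _ _ _).trans (hV E hE), ?_⟩
    have h1 : (rs χ E T).image χ = univ \ T := by
      ext c
      simp only [mem_image, mem_sdiff, mem_univ, true_and, mem_rs]
      constructor
      · rintro ⟨x, ⟨_, h⟩, rfl⟩; exact h
      · intro h
        obtain ⟨x, hx, hxc⟩ := rainbow_surj (hc E hE) (hi E hE) c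
        exact ⟨x, ⟨hx, by rwa [hxc]⟩, hxc⟩
    rw [← card_image_of_injOn (f := χ) (s := rs χ E T), h1, card_univ_sdiff]
    · simp
    · exact (hi E hE).mono (by exact_mod_cast rs_subset χ E T)
  have := card_le_mul_card_image_of_maps_to hmaps (w ^ T.card) (by
    intro B hB
    rcases (H.filter (fun E => rs χ E T = B)).eq_empty_or_nonempty with he | ⟨E, hE⟩
    · rw [he]; simp
    · rw [mem_filter] at hE
      obtain ⟨hE, rfl⟩ := hE
      refine le_trans (card_le_card ?_) (hom_fiber hc hi hA _ T rfl hno E hE)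
      intro X hX
      rw [mem_filter] at hX ⊢
      exact ⟨hX.1, hX.2 ▸ rs_subset _ _ _⟩)
  refine this.trans (Nat.mul_le_mul_left _ ?_)
  rw [card_powersetCard]
  exact Nat.choose_le_pow _ _

end hom


section comb
variable {k : ℕ} {A : Finset (Finset (Fin k))}

lemma uc_cover (h0 : ∅ ∈ A) (hU : ∀ S ∈ A, ∀ T ∈ A, S ∪ T ∈ A) (B : Finset (Fin k))
    (hB : ∀ s ∈ B, ∃ T ∈ A, s ∈ T ∧ T ⊆ B) : B ∈ A := by
  have h1 : (A.filter (fun T => T ⊆ B)).sup id ∈ (A : Set (Finset (Fin k))) := by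
    apply Finset.sup_mem
    · simpa using h0
    · intro x hx y hy; exact hU x hx y hy
    · intro i hi; exact (mem_filter.1 hi).1
  have h2 : (A.filter (fun T => T ⊆ B)).sup id = B := by
    apply le_antisymm
    · apply Finset.sup_le
      intro T hT; exact (mem_filter.1 hT).2
    · intro s hs
      obtain ⟨T, hT, hsT, hTB⟩ := hB s hs
      exact (Finset.le_sup (f := id) (mem_filter.2 ⟨hT, hTB⟩) : T ≤ _) hsT
  rw [h2] at h1; exact h1

lemma uc_max (h0 : ∅ ∈ A) (hU : ∀ S ∈ A, ∀ T ∈ A, S ∪ T ∈ A) (p : Fin k) :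
    ∃ U ∈ A, p ∉ U ∧ ∀ T ∈ A, p ∉ T → T ⊆ U := by
  refine ⟨(A.filter (fun T => p ∉ T)).biUnion id, ?_, ?_, ?_⟩
  · apply uc_cover h0 hU
    intro s hs
    simp only [mem_biUnion, mem_filter, id] at hs
    obtain ⟨T, hT, hsT⟩ := hs
    refine ⟨T, hT.1, hsT, ?_⟩
    exact subset_biUnion_of_mem id (mem_filter.2 hT)
  · simp only [mem_biUnion, mem_filter, id, not_exists, not_and]
    intro T hT; exact hT.2
  · intro T hT hp
    exact subset_biUnion_of_mem id (mem_filter.2 ⟨hT, hp⟩)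

lemma exists_notMem_of_card_lt (B : Finset (Fin k)) (h : B.card < k) : ∃ s, s ∉ B := by
  by_contra hno
  push Not at hno
  have : B = univ := eq_univ_of_forall hno
  rw [this] at h; simp at h

lemma comb2 (hk : 4 ≤ k) (h0 : ∅ ∈ A) (hU : ∀ S ∈ A, ∀ T ∈ A, S ∪ T ∈ A)
    (h2 : ∀ a b : Fin k, a ≠ b → ∃ T ∈ A, T.Nonempty ∧ T ⊆ {a, b}) :
    (∃ x : Fin k, ∀ i, i ≠ x → {i} ∈ A) ∨
    (∃ p q : Fin k, p ≠ q ∧ univ.erase p ∈ A ∧ univ.erase q ∈ A) := by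
  choose U hUA hpU hmax using uc_max h0 hU
  by_cases hc : ∃ p q, q ≠ p ∧ q ∉ U p
  · obtain ⟨p, q, hqp, hq⟩ := hc
    have hs : ∀ r, r ≠ p → r ≠ q → {r} ∈ A := by
      intro r hrp hrq
      obtain ⟨T, hT, hTn, hTs⟩ := h2 q r (Ne.symm hrq)
      have hpT : p ∉ T := by
        intro h; have := hTs h; simp at this; tauto
      have hqT : q ∉ T := fun h => hq (hmax p T hT hpT h)
      have : T = {r} := by
        apply (Finset.Nonempty.subset_singleton_iff hTn).1
        intro x hx
        have := hTs hx
        simp at this ⊢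
        rcases this with h | h
        · subst h; exact absurd hx hqT
        · exact h
      rw [← this]; exact hT
    obtain ⟨T, hT, hTn, hTs⟩ := h2 p q (Ne.symm hqp)
    have hpT : p ∈ T := by
      by_contra hp
      obtain ⟨x, hx⟩ := hTn
      have := hTs hx
      simp at this
      rcases this with h | h
      · subst h; exact hp hx
      · subst h; exact hq (hmax p T hT hp hx)
    by_cases hqT : q ∈ T
    · right
      have hT' : T = {p, q} := by
        apply Subset.antisymm hTs
        intro x hx; simp at hx; rcases hx with rfl | rfl <;> assumption
      have herase : ∀ r, r ≠ p → r ≠ q → univ.erase r ∈ A := by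
        intro r hrp hrq
        apply uc_cover h0 hU
        intro s hs'
        have hsr : s ≠ r := by simpa using hs'
        by_cases h : s = p ∨ s = q
        · refine ⟨T, hT, by rw [hT']; simpa using h, ?_⟩
          rw [hT']; intro x hx; simp at hx ⊢
          rcases hx with rfl | rfl
          · exact hrp.symm
          · exact hrq.symm
        · push Not at h
          exact ⟨{s}, hs s h.1 h.2, by simp, by simpa using hsr⟩
      obtain ⟨r, hr⟩ := exists_notMem_of_card_lt {p, q} (lt_of_le_of_lt card_le_two (by omega))
      obtain ⟨r', hr'⟩ := exists_notMem_of_card_lt {p, q, r} (lt_of_le_of_lt card_le_three (by omega))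
      simp at hr hr'
      exact ⟨r, r', fun h => hr'.2.2 h.symm, herase r hr.1 hr.2, herase r' hr'.1 hr'.2.1⟩
    · left
      refine ⟨q, fun i hi => ?_⟩
      by_cases hip : i = p
      · subst hip
        have : T = {i} := by
          apply (Finset.Nonempty.subset_singleton_iff hTn).1
          intro x hx
          have := hTs hx
          simp at this ⊢
          rcases this with h | h
          · exact h
          · subst h; exact absurd hx hqT
        rw [← this]; exact hT
      · exact hs i hip hi
  · right
    push Not at hc
    have he : ∀ p, univ.erase p ∈ A := by
      intro p
      have : univ.erase p = U p := by
        ext x; simp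
        constructor
        · intro h; exact hc p x h
        · rintro h rfl; exact hpU _ h
      rw [this]; exact hUA p
    exact ⟨⟨0, by omega⟩, ⟨1, by omega⟩, by simp, he _, he _⟩

lemma comb3 (hk : 4 ≤ k) (h0 : ∅ ∈ A) (hU : ∀ S ∈ A, ∀ T ∈ A, S ∪ T ∈ A)
    (h1 : ∀ p : Fin k, univ.erase p ∉ A)
    (h3 : ∀ a b c : Fin k, a ≠ b → a ≠ c → b ≠ c → ∃ T ∈ A, T.Nonempty ∧ T ⊆ {a, b, c}) :
    (∃ u v : Fin k, u ≠ v ∧ ∀ i, i ≠ u → i ≠ v → {i} ∈ A) ∨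
    (k = 4 ∧ ∃ B : Finset (Fin k), B.card = 2 ∧ B ∈ A ∧ Bᶜ ∈ A) := by
  choose U hUA hpU hmax using uc_max h0 hU
  obtain ⟨u, -, hu⟩ := exists_max_image (univ : Finset (Fin k)) (fun p => (U p).card)
    ⟨⟨0, by omega⟩, mem_univ _⟩
  have hex : ∃ v, v ≠ u ∧ v ∉ U u := by
    by_contra hno
    push Not at hno
    apply h1 u
    have : univ.erase u = U u := by
      ext x; simp
      constructor
      · intro h; exact hno x h
      · rintro h rfl; exact hpU _ h
    rw [this]; exact hUA u
  obtain ⟨v, hvu, hv⟩ := hex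
  have hvu' : ∀ T ∈ A, v ∈ T → u ∈ T := by
    intro T hT hvT
    by_contra h
    exact hv (hmax u T hT h hvT)
  have hUU : U u = U v := eq_of_subset_of_card_le (hmax v _ (hUA u) hv) (hu v (mem_univ _))
  have huv' : ∀ T ∈ A, u ∈ T → v ∈ T := by
    intro T hT huT
    by_contra h
    have := hmax v T hT h huT
    rw [← hUU] at this
    exact hpU u this
  by_cases hall : ∀ i, i ≠ u → i ≠ v → {i} ∈ A
  · exact Or.inl ⟨u, v, hvu.symm, hall⟩
  push Not at hall
  obtain ⟨r, hru, hrv, hr⟩ := hall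
  have hTs : ∀ s, s ≠ u → s ≠ v → s ≠ r → ∃ T ∈ A, s ∈ T ∧ T ⊆ {r, s} := by
    intro s hsu hsv hsr
    obtain ⟨T, hT, hTn, hTs⟩ := h3 u r s hru.symm hsu.symm hsr.symm
    have huT : u ∉ T := by
      intro h
      have := hTs (huv' T hT h)
      simp at this
      rcases this with h | h | h
      · exact hvu h
      · exact hrv h.symm
      · exact hsv h.symm
    have hsub : T ⊆ {r, s} := by
      intro x hx
      have := hTs hx
      simp at this ⊢
      rcases this with h | h
      · subst h; exact absurd hx huT
      · exact h
    refine ⟨T, hT, ?_, hsub⟩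
    by_contra hs
    apply hr
    have : T = {r} := by
      apply (Finset.Nonempty.subset_singleton_iff hTn).1
      intro x hx
      have := hsub hx
      simp at this ⊢
      rcases this with h | h
      · exact h
      · subst h; exact absurd hx hs
    rw [← this]; exact hT
  obtain ⟨T0, hT0, hT0n, hT0s⟩ := h3 u v r hvu.symm hru.symm hrv.symm
  have huT0 : u ∈ T0 := by
    by_contra h
    have hv0 : v ∉ T0 := fun h' => h (hvu' T0 hT0 h')
    apply hr
    have : T0 = {r} := by
      apply (Finset.Nonempty.subset_singleton_iff hT0n).1
      intro x hx
      have := hT0s hx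
      simp at this ⊢
      rcases this with h' | h' | h'
      · subst h'; exact absurd hx h
      · subst h'; exact absurd hx hv0
      · exact h'
    rw [← this]; exact hT0
  have hvT0 := huv' T0 hT0 huT0
  have cov : ∀ s0, s0 ≠ u → s0 ≠ v → s0 ≠ r → (∃ T ∈ A, r ∈ T ∧ s0 ∉ T) → False := by
    rintro s0 hsu hsv hsr ⟨T, hT, hrT, hsT⟩
    apply h1 s0
    apply uc_cover h0 hU
    intro s hs
    have hss : s ≠ s0 := by simpa using hs
    by_cases h : s = u ∨ s = v
    · refine ⟨T0, hT0, by rcases h with rfl | rfl <;> assumption, ?_⟩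
      intro x hx
      have := hT0s hx
      simp at this ⊢
      rintro rfl
      tauto
    push Not at h
    by_cases hsr' : s = r
    · subst hsr'
      refine ⟨T, hT, hrT, fun x hx => ?_⟩
      simp; rintro rfl; exact hsT hx
    · obtain ⟨T', hT', hsT', hsub⟩ := hTs s h.1 h.2 hsr'
      refine ⟨T', hT', hsT', fun x hx => ?_⟩
      have := hsub hx
      simp at this ⊢
      rintro rfl
      rcases this with h | h
      · exact hsr h
      · exact hss h.symm
  obtain ⟨s0, hs0⟩ := exists_notMem_of_card_lt {u, v, r} (lt_of_le_of_lt card_le_three (by omega))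
  simp at hs0
  obtain ⟨hs0u, hs0v, hs0r⟩ := hs0
  by_cases hrT0 : r ∈ T0
  · exfalso
    refine cov s0 hs0u hs0v hs0r ⟨T0, hT0, hrT0, fun h => ?_⟩
    have := hT0s h
    simp at this; tauto
  have hT0' : T0 = {u, v} := by
    ext x; simp
    constructor
    · intro hx
      have := hT0s hx
      simp at this
      rcases this with h | h | h
      · exact Or.inl h
      · exact Or.inr h
      · subst h; exact absurd hx hrT0
    · rintro (rfl | rfl) <;> assumption
  by_cases hss : ∃ s, s ≠ u ∧ s ≠ v ∧ s ≠ r ∧ {s} ∉ A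
  · obtain ⟨s, hsu, hsv, hsr, hsA⟩ := hss
    obtain ⟨T, hT, hsT, hsub⟩ := hTs s hsu hsv hsr
    have hrT : r ∈ T := by
      by_contra h
      apply hsA
      have : T = {s} := by
        apply (Finset.Nonempty.subset_singleton_iff ⟨s, hsT⟩).1
        intro x hx
        have := hsub hx
        simp at this ⊢
        rcases this with h' | h'
        · subst h'; exact absurd hx h
        · exact h'
      rw [← this]; exact hT
    have hT' : T = {r, s} := by
      apply Subset.antisymm hsub
      intro x hx; simp at hx; rcases hx with rfl | rfl <;> assumption
    have hfour : ∀ x, x = u ∨ x = v ∨ x = r ∨ x = s := by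
      intro x
      by_contra h
      push Not at h
      refine cov x h.1 h.2.1 h.2.2.1 ⟨T, hT, hrT, ?_⟩
      rw [hT']; simp; exact ⟨h.2.2.1, h.2.2.2⟩
    right
    have hc2 : ({u, v} : Finset (Fin k)).card = 2 := card_pair hvu.symm
    have hcomp : ({u, v} : Finset (Fin k))ᶜ = {r, s} := by
      ext x; simp
      constructor
      · rintro ⟨h1, h2⟩; have := hfour x; tauto
      · rintro (rfl | rfl)
        · exact ⟨hru, hrv⟩
        · exact ⟨hsu, hsv⟩
    refine ⟨?_, {u, v}, hc2, hT0' ▸ hT0, ?_⟩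
    · have := card_compl ({u, v} : Finset (Fin k))
      rw [hcomp, card_pair hsr.symm, hc2] at this
      simp at this; omega
    · rw [hcomp, ← hT']; exact hT
  · exfalso
    push Not at hss
    apply h1 r
    apply uc_cover h0 hU
    intro s hs
    have hsr : s ≠ r := by simpa using hs
    by_cases h : s = u ∨ s = v
    · refine ⟨T0, hT0, by rcases h with rfl | rfl <;> assumption, ?_⟩
      intro x hx
      simp; rintro rfl; exact hrT0 hx
    · push Not at h
      exact ⟨{s}, hss s h.1 h.2 hsr, by simp, by simpa using hsr⟩

end comb

section paths
variable {α : Type} [DecidableEq α]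

/-- linear paths as lists. -/
def IsLP : List (Finset α) → Prop
  | [] => True
  | E :: L => IsLP L ∧ (∀ C ∈ L.tail, Disjoint E C) ∧ (∀ B ∈ L.head?, (E ∩ B).card = 1)

lemma IsLP.adj : ∀ (l : List (Finset α)), IsLP l → ∀ i (h : i + 1 < l.length),
    (l[i] ∩ l[i+1]).card = 1 := by
  intro l
  induction l with
  | nil => intro _ i h; simp at h
  | cons E L ih =>
    intro hl i h
    obtain ⟨h1, h2, h3⟩ := hl
    cases i with
    | zero =>
      cases L with
      | nil => simp at h
      | cons B L => simpa using h3 B (by simp)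
    | succ i => simpa using ih h1 i (by simpa using h)

lemma IsLP.disj : ∀ (l : List (Finset α)), IsLP l → ∀ i j (hj : j < l.length) (h : i + 1 < j),
    Disjoint (l[i]'(by omega)) l[j] := by
  intro l
  induction l with
  | nil => intro _ i j hj h; simp at hj
  | cons E L ih =>
    intro hl i j hj h
    obtain ⟨h1, h2, h3⟩ := hl
    cases j with
    | zero => omega
    | succ j =>
      cases i with
      | zero =>
        cases L with
        | nil => simp at hj
        | cons B L =>
          cases j with
          | zero => omega
          | succ j =>
            simp only [List.getElem_cons_zero, List.getElem_cons_succ]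
            apply h2
            simp
      | succ i => simpa using ih h1 i j (by simpa using hj) (by omega)

/-- A linear path of length `m` in `F`, avoiding `W`, ending at a free vertex `v`. -/
def Reach (F : Finset (Finset α)) (m : ℕ) (v : α) (W : Finset α) : Prop :=
  ∃ (E : Finset α) (L : List (Finset α)), IsLP (E :: L) ∧ (E :: L).length = m ∧
    (∀ X ∈ E :: L, X ∈ F ∧ Disjoint X W) ∧ v ∈ E ∧ ∀ X ∈ L, v ∉ X

lemma Reach.toPath {n k m : ℕ} (hk : 2 ≤ k) {F : Finset (Finset (Fin n))} {v : Fin n}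
    {W : Finset (Fin n)} (hF : ∀ E ∈ F, E.card = k) (h : Reach F m v W) :
    ContainsLinearPath k m F := by
  obtain ⟨E, L, hl, hlen, hm, -, -⟩ := h
  set l := E :: L with hl'
  subst hlen
  have hmem : ∀ i : Fin l.length, l[i] ∈ F := fun i => (hm _ (List.getElem_mem _)).1
  have hadj : ∀ i j : Fin l.length, (i : ℕ) + 1 = (j : ℕ) → (l[i] ∩ l[j]).card = 1 := by
    intro i j hij
    have := IsLP.adj l hl i (by omega)
    simp only [hij] at this
    exact this
  have hdis : ∀ i j : Fin l.length, (i : ℕ) + 1 < (j : ℕ) → l[i] ∩ l[j] = ∅ := by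
    intro i j hij
    exact disjoint_iff_inter_eq_empty.1 (IsLP.disj l hl i j j.2 hij)
  have hlt : ∀ i j : Fin l.length, i < j → l[i] ≠ l[j] := by
    intro i j hij he
    have hc := hF _ (hmem j)
    rcases Nat.lt_or_ge ((i : ℕ) + 1) j with h | h
    · have := hdis i j h
      rw [he, inter_self] at this
      rw [this] at hc; simp at hc; omega
    · have := hadj i j (by have : (i : ℕ) < j := hij; omega)
      rw [he, inter_self] at this
      omega
  refine ⟨fun i => l[i], ?_, hmem, fun i => hF _ (hmem i), hadj, hdis⟩
  intro i j hij
  by_contra hne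
  rcases lt_or_gt_of_ne hne with h | h
  · exact hlt i j h hij
  · exact hlt j i h hij.symm

lemma Reach.one {F : Finset (Finset α)} {E W : Finset α} {v : α} (hE : E ∈ F)
    (hd : Disjoint E W) (hv : v ∈ E) : Reach F 1 v W :=
  ⟨E, [], by simp [IsLP], by simp, by simp [hE, hd], hv, by simp⟩

lemma Reach.mono {F : Finset (Finset α)} {m : ℕ} {v : α} {W W' : Finset α} (h : Reach F m v W)
    (hW : W' ⊆ W) : Reach F m v W' := by
  obtain ⟨E, L, h1, h2, h3, h4, h5⟩ := h
  exact ⟨E, L, h1, h2, fun X hX => ⟨(h3 X hX).1, disjoint_of_subset_right hW (h3 X hX).2⟩, h4, h5⟩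

lemma Reach.mono_fam {F G : Finset (Finset α)} {m : ℕ} {v : α} {W : Finset α} (h : Reach F m v W)
    (hW : F ⊆ G) : Reach G m v W := by
  obtain ⟨E, L, h1, h2, h3, h4, h5⟩ := h
  exact ⟨E, L, h1, h2, fun X hX => ⟨hW (h3 X hX).1, (h3 X hX).2⟩, h4, h5⟩

/-- master extension lemma -/
lemma Reach.ext {k w m : ℕ} {F : Finset (Finset α)} (hF : ∀ E ∈ F, E.card = k)
    {v : α} {W : Finset α} (h : Reach F m v W) {U : Finset α} (hvU : v ∈ U)
    (hUW : U.erase v ⊆ W) (hK : Ker w F U) (hw : k * m + W.card ≤ w) :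
    ∃ E' ∈ F, U ⊆ E' ∧ ∀ x ∈ E', x ≠ v → Reach F (m + 1) x (W \ U) := by
  obtain ⟨E, L, hlp, hlen, hm, hvE, hvL⟩ := h
  set B := (E :: L).toFinset.biUnion id with hB
  have hBc : B.card ≤ k * m := by
    have h1 : B.card ≤ (E :: L).toFinset.card * k :=
      card_biUnion_le_card_mul _ _ _ (fun X hX => (hF X (hm X (by simpa using hX)).1).le)
    have h2 := List.toFinset_card_le (E :: L)
    rw [hlen] at h2
    calc B.card ≤ _ := h1
      _ ≤ m * k := Nat.mul_le_mul_right _ h2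
      _ = _ := mul_comm _ _
  have hBX : ∀ X ∈ E :: L, ∀ x ∈ X, x ∈ B := by
    intro X hX x hx
    rw [hB, mem_biUnion]
    exact ⟨X, by simpa using hX, hx⟩
  obtain ⟨E', hE', hUE, hd⟩ := hK (B ∪ W) ((card_union_le _ _).trans (by omega))
  rw [disjoint_left] at hd
  have hkey : ∀ X ∈ E :: L, ∀ x ∈ E', x ∈ X → x = v := by
    intro X hX x hx hxX
    by_contra hne
    by_cases hxU : x ∈ U
    · have hxW := hUW (mem_erase.2 ⟨hne, hxU⟩)
      exact (disjoint_left.1 (hm X hX).2 hxX) hxW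
    · exact hd (mem_sdiff.2 ⟨hx, hxU⟩) (mem_union_left _ (hBX X hX x hxX))
  refine ⟨E', hE', hUE, fun x hx hxv => ?_⟩
  refine ⟨E', E :: L, ⟨hlp, ?_, ?_⟩, by simp [← hlen], ?_, hx, ?_⟩
  · intro C hC
    have hC' : C ∈ L := by simpa using hC
    rw [disjoint_left]
    intro y hy hyC
    have := hkey C (by simp [hC']) y hy hyC
    subst this
    exact hvL C hC' hyC
  · intro C hC
    have : C = E := by simpa using hC.symm
    subst this
    rw [card_eq_one]
    refine ⟨v, ?_⟩
    ext y; simp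
    constructor
    · rintro ⟨h1, h2⟩; exact hkey C (by simp) y h1 h2
    · rintro rfl; exact ⟨hUE hvU, hvE⟩
  · intro X hX
    rcases List.mem_cons.1 hX with rfl | hX
    · refine ⟨hE', ?_⟩
      rw [disjoint_left]
      intro y hy hyW
      rw [mem_sdiff] at hyW
      exact hd (mem_sdiff.2 ⟨hy, hyW.2⟩) (mem_union_right _ hyW.1)
    · exact ⟨(hm X hX).1, disjoint_of_subset_right sdiff_subset (hm X hX).2⟩
  · intro X hX hxX
    exact hxv (hkey X hX x hx hxX)

lemma Reach.step {k w m : ℕ} {F : Finset (Finset α)} (hF : ∀ E ∈ F, E.card = k)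
    {v x : α} {W : Finset α} (h : Reach F m v W) (hx : x ∈ W) (hxv : x ≠ v)
    (hK : Ker w F {v, x}) (hw : k * m + W.card ≤ w) : Reach F (m + 1) x (W.erase x) := by
  obtain ⟨E', hE', hU, hE⟩ := h.ext hF (U := {v, x}) (by simp) (by
    intro y hy
    rw [mem_erase, mem_insert, mem_singleton] at hy
    rcases hy.2 with h2 | h2
    · exact absurd h2 hy.1
    · subst h2; exact hx) hK hw
  refine (hE x (hU (by simp)) hxv).mono ?_
  have hvW : v ∉ W := by
    obtain ⟨E, L, hlp, hlen, hm, hvE, hvL⟩ := h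
    exact disjoint_left.1 (hm E (by simp)).2 hvE
  intro y hy
  rw [mem_erase] at hy
  rw [mem_sdiff]
  refine ⟨hy.2, ?_⟩
  simp
  exact ⟨fun h => hvW (h ▸ hy.2), hy.1⟩

lemma Reach.enlarge {k m : ℕ} {F : Finset (Finset α)} (hF : ∀ E ∈ F, E.card = k)
    {v : α} {W : Finset α} (h : Reach F m v W) :
    ∃ B : Finset α, B.card ≤ k * m ∧ v ∈ B ∧ ∀ y ∉ B, Reach F m v (insert y W) := by
  obtain ⟨E, L, hlp, hlen, hm, hvE, hvL⟩ := h
  refine ⟨(E :: L).toFinset.biUnion id, ?_, ?_, ?_⟩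
  · have h1 : ((E :: L).toFinset.biUnion id).card ≤ (E :: L).toFinset.card * k :=
      card_biUnion_le_card_mul _ _ _ (fun X hX => (hF X (hm X (by simpa using hX)).1).le)
    have h2 := List.toFinset_card_le (E :: L)
    rw [hlen] at h2
    calc _ ≤ _ := h1
      _ ≤ m * k := Nat.mul_le_mul_right _ h2
      _ = _ := mul_comm _ _
  · rw [mem_biUnion]; exact ⟨E, by simp, hvE⟩
  · intro y hy
    refine ⟨E, L, hlp, hlen, fun X hX => ⟨(hm X hX).1, ?_⟩, hvE, hvL⟩
    rw [disjoint_insert_right]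
    refine ⟨fun hyX => hy ?_, (hm X hX).2⟩
    rw [mem_biUnion]; exact ⟨X, by simpa using hX, hyX⟩

lemma Reach.stepN {k w m : ℕ} {F : Finset (Finset α)} (hF : ∀ E ∈ F, E.card = k)
    {v : α} {W N : Finset α} (h : Reach F m v W) (hN : ∀ y ∈ N, Ker w F {v, y})
    (hNW : Disjoint N W) (hNc : k * m < N.card) (hw : k * m + W.card + 1 ≤ w) :
    ∃ y ∈ N, Reach F (m + 1) y W := by
  obtain ⟨B, hB, hvB, hy⟩ := h.enlarge hF
  obtain ⟨y, hyN, hyB⟩ := exists_mem_notMem_of_card_lt_card (lt_of_le_of_lt hB hNc)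
  refine ⟨y, hyN, ?_⟩
  have := (hy y hyB).step hF (mem_insert_self _ _) (fun h => hyB (h ▸ hvB)) (hN y hyN)
    (by have := card_insert_le y W; omega)
  rwa [erase_insert (disjoint_left.1 hNW hyN)] at this

lemma Reach.finish {k w m : ℕ} {F : Finset (Finset α)} (hF : ∀ E ∈ F, E.card = k) (hk : 2 ≤ k)
    {v : α} {W : Finset α} (h : Reach F m v W) (hK : Ker w F {v}) (hw : k * m + W.card ≤ w) :
    ∃ x, Reach F (m + 1) x ∅ := by
  obtain ⟨E', hE', hU, hE⟩ := h.ext hF (U := {v}) (by simp) (by simp) hK hw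
  have : ∃ x ∈ E', x ≠ v := exists_mem_ne (by rw [hF E' hE']; omega) v
  obtain ⟨x, hx, hxv⟩ := this
  exact ⟨x, (hE x hx hxv).mono (by simp)⟩

lemma Ker.single {w : ℕ} {F : Finset (Finset α)} {x : α} {N : Finset α} (hN : w < N.card)
    (h : ∀ y ∈ N, Ker w F {x, y}) : Ker w F {x} := by
  intro W hW
  obtain ⟨y, hy, hyW⟩ := exists_mem_notMem_of_card_lt_card (lt_of_le_of_lt hW hN)
  obtain ⟨E, hE, h1, h2⟩ := h y hy W hW
  refine ⟨E, hE, fun z hz => h1 (by simp at hz; simp [hz]), ?_⟩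
  rw [disjoint_left] at h2 ⊢
  intro z hz hzW
  apply h2 _ hzW
  simp at hz ⊢
  refine ⟨hz.1, hz.2, ?_⟩
  rintro rfl; exact hyW hzW

/-- the weaving lemma -/
lemma weave {k w ℓ : ℕ} {F : Finset (Finset α)} (hF : ∀ E ∈ F, E.card = k) (hk : 2 ≤ k)
    (N : Finset α) (hw : k * ℓ + ℓ + 1 ≤ w) (hNc : w < N.card) :
    ∀ (s : ℕ) (S : Finset α), S.card = s + 1 → Disjoint S N →
      (∀ x ∈ S, ∀ y ∈ N, Ker w F {x, y}) → ∀ (m : ℕ) (y : α), y ∈ N → Reach F m y S →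
      m + 2 * (s + 1) ≤ ℓ → ∃ x, Reach F (m + 2 * (s + 1)) x ∅ := by
  intro s
  induction s with
  | zero =>
    intro S hS hSN hK m y hy hR hm
    have hkm : k * m ≤ k * ℓ := Nat.mul_le_mul_left _ (by omega)
    have hkm1 : k * (m + 1) ≤ k * ℓ := Nat.mul_le_mul_left _ (by omega)
    obtain ⟨x, hx⟩ := card_eq_one.1 hS
    subst hx
    have h1 := hR.step (x := x) hF (by simp)
      (fun h => disjoint_left.1 hSN (mem_singleton_self x) (h ▸ hy))
      (by rw [pair_comm]; exact hK x (by simp) y hy) (by simp; omega)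
    exact h1.finish hF hk (Ker.single hNc (hK x (by simp))) (by simp; omega)
  | succ s ih =>
    intro S hS hSN hK m y hy hR hm
    have hkm : k * m ≤ k * ℓ := Nat.mul_le_mul_left _ (by omega)
    have hkm1 : k * (m + 1) ≤ k * ℓ := Nat.mul_le_mul_left _ (by omega)
    obtain ⟨x, hx⟩ := card_pos.1 (by omega : 0 < S.card)
    have h1 := hR.step (x := x) hF hx
      (fun h => disjoint_left.1 hSN hx (h ▸ hy))
      (by rw [pair_comm]; exact hK x hx y hy) (by omega)
    have hc : (S.erase x).card = s + 1 := by rw [card_erase_of_mem hx]; omega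
    obtain ⟨y', hy', h2⟩ := h1.stepN hF (hK x hx)
      (disjoint_of_subset_right (erase_subset _ _) hSN.symm) (by omega) (by omega)
    obtain ⟨z, hz⟩ := ih (S.erase x) hc (disjoint_of_subset_left (erase_subset _ _) hSN)
      (fun x' hx' => hK x' (mem_of_mem_erase hx')) (m + 2) y' hy' h2 (by omega)
    exact ⟨z, by convert hz using 1; omega⟩

end paths


/-- constant of the homogeneity lemma -/
def KC (k : ℕ) : ℕ := k ^ k * (2 ^ 2 ^ k) ^ (2 ^ k)

/-- `E` is a star edge with centre `x`. -/
def IsStar {α : Type} [DecidableEq α] (w : ℕ) (F : Finset (Finset α)) (E : Finset α) (x : α) : Prop :=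
  x ∈ E ∧ ∀ U, x ∈ U → U ⊆ E → Ker w F U

section struct
variable {α : Type} [DecidableEq α] [Fintype α]

lemma rs_image {k : ℕ} {χ : α → Fin k} {E U : Finset α} (hi : Set.InjOn χ (E : Set α))
    (hU : U ⊆ E) : rs χ E ((E \ U).image χ) = U := by
  ext x
  rw [mem_rs, mem_image]
  constructor
  · rintro ⟨h1, h2⟩
    by_contra hx
    exact h2 ⟨x, mem_sdiff.2 ⟨h1, hx⟩, rfl⟩
  · intro hx
    refine ⟨hU hx, ?_⟩
    rintro ⟨y, hy, hyx⟩
    rw [mem_sdiff] at hy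
    have := hi hy.1 (hU hx) hyx
    exact hy.2 (this ▸ hx)

lemma rs_compl_singleton {k : ℕ} {χ : α → Fin k} {E : Finset α} {v : α}
    (hi : Set.InjOn χ (E : Set α)) (hv : v ∈ E) : rs χ E (univ.erase (χ v)) = {v} := by
  ext x
  rw [mem_rs]
  simp
  constructor
  · rintro ⟨h1, h2⟩
    exact hi h1 hv h2
  · rintro rfl; exact ⟨hv, rfl⟩

lemma star_lemma {k w ℓ : ℕ} (hk : 4 ≤ k) (hℓ : 1 ≤ ℓ) (hw : k * ℓ ≤ w)
    (F : Finset (Finset α)) (hF : ∀ E ∈ F, E.card = k) (V : Finset α) (hV : ∀ E ∈ F, E ⊆ V)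
    (hno : ∀ v, ¬ Reach F ℓ v ∅) (Q : Finset (Finset α)) (hQF : Q ⊆ F)
    (hQ : ∀ E ∈ Q, ¬ ∃ x, IsStar w F E x) :
    Q.card ≤ KC k * (w ^ 2 * V.card ^ (k - 2)) := by
  obtain ⟨H, χ, A, hHQ, hcard, hi, hA⟩ := hom_lemma k w (by omega) Q (fun E hE => hF E (hQF hE))
  have hHF : H ⊆ F := hHQ.trans hQF
  rcases H.eq_empty_or_nonempty with rfl | hne
  · simp at hcard; simp [hcard]
  have hc : ∀ E ∈ H, E.card = k := fun E hE => hF E (hHF hE)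
  by_contra hlt
  have h0 : ∅ ∈ A := by
    obtain ⟨E, hE⟩ := hne
    rw [hA E hE]
    have : rs χ E ∅ = E := by ext; simp [mem_rs]
    rw [this]; exact Ker.of_mem hE
  have hU : ∀ S ∈ A, ∀ T ∈ A, S ∪ T ∈ A := fun S hS T hT => hom_union hc hi hA hne hS hT
  have h2 : ∀ a b : Fin k, a ≠ b → ∃ T ∈ A, T.Nonempty ∧ T ⊆ {a, b} := by
    intro a b hab
    by_contra hcon
    push Not at hcon
    have := hom_dense V (fun E hE => hV E (hHF hE)) hc hi hA {a, b}
      (fun T' hT' hT'n hT'A => hcon T' hT'A hT'n hT')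
    rw [card_pair hab] at this
    apply hlt
    exact hcard.trans (Nat.mul_le_mul_left _ this)
  rcases comb2 hk h0 hU h2 with ⟨x, hx⟩ | ⟨p, q, hpq, hp, hq⟩
  · obtain ⟨E, hE⟩ := hne
    obtain ⟨v, hv, hvx⟩ := rainbow_surj (hc E hE) (hi E hE) x
    apply hQ E (hHQ hE)
    refine ⟨v, hv, fun U hvU hUE => ?_⟩
    have hT : (E \ U).image χ ∈ A := by
      apply uc_cover h0 hU
      intro s hs
      refine ⟨{s}, hx s ?_, by simp, by simpa using hs⟩
      rintro rfl
      obtain ⟨y, hy, hys⟩ := mem_image.1 hs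
      rw [mem_sdiff] at hy
      have := hi E hE hy.1 hv (hys.trans hvx.symm)
      exact hy.2 (this ▸ hvU)
    have := (hA E hE _).1 hT
    rw [rs_image (hi E hE) hUE] at this
    exact this.mono hHF
  · have hR : ∀ m, 1 ≤ m → m ≤ ℓ → ∃ v, χ v = p ∨ χ v = q ∧ True ∧ True := by
      intro m _ _
      obtain ⟨E, hE⟩ := hne
      obtain ⟨v, hv, hvx⟩ := rainbow_surj (hc E hE) (hi E hE) p
      exact ⟨v, Or.inl hvx⟩
    clear hR
    have hR : ∀ m, 1 ≤ m → m ≤ ℓ → ∃ v, ((χ v = p ∨ χ v = q) ∧ ∃ E ∈ H, v ∈ E) ∧ Reach H m v ∅ := by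
      intro m hm
      induction m, hm using Nat.le_induction with
      | base =>
        intro _
        obtain ⟨E, hE⟩ := hne
        obtain ⟨v, hv, hvx⟩ := rainbow_surj (hc E hE) (hi E hE) p
        exact ⟨v, ⟨Or.inl hvx, E, hE, hv⟩, Reach.one hE (by simp) hv⟩
      | succ m hm ih =>
        intro hmℓ
        obtain ⟨v, ⟨hvc, E, hE, hvE⟩, hr⟩ := ih (by omega)
        have hK : Ker w H {v} := by
          rw [← rs_compl_singleton (hi E hE) hvE, ← hA E hE]
          rcases hvc with h | h <;> rw [h] <;> assumption
        obtain ⟨E', hE', hU', hx⟩ := hr.ext hc (U := {v}) (by simp) (by simp) hK (by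
          have : k * m ≤ k * ℓ := Nat.mul_le_mul_left _ (by omega)
          simp; omega)
        have hex : ∃ c, (c = p ∨ c = q) ∧ c ≠ χ v := by
          by_cases h : χ v = p
          · exact ⟨q, Or.inr rfl, by rw [h]; exact hpq.symm⟩
          · exact ⟨p, Or.inl rfl, fun h' => h h'.symm⟩
        obtain ⟨c, hc1, hc2⟩ := hex
        obtain ⟨y, hy, hyc⟩ := rainbow_surj (hc E' hE') (hi E' hE') c
        refine ⟨y, ⟨by rw [hyc]; exact hc1, E', hE', hy⟩, ?_⟩
        have := hx y hy (by rintro rfl; exact hc2 hyc.symm)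
        simpa using this
    obtain ⟨v, -, hv⟩ := hR ℓ hℓ le_rfl
    exact hno v (hv.mono_fam hHF)

/-- no two edges meeting in exactly one vertex -/
def P2Free (F : Finset (Finset α)) : Prop := ∀ E ∈ F, ∀ E' ∈ F, (E ∩ E').card ≠ 1

lemma P2Free.no_single {k w : ℕ} (hk : 1 ≤ k) {F : Finset (Finset α)} (hF : ∀ E ∈ F, E.card = k)
    (h : P2Free F) (hw : k ≤ w) {E : Finset α} (hE : E ∈ F) {U : Finset α} (hK : Ker w F U)
    (hU : (U ∩ E).card = 1) : False := by
  obtain ⟨E', hE', h1, h2⟩ := hK E (by rw [hF E hE]; exact hw)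
  apply h E' hE' E hE
  have : E' ∩ E = U ∩ E := by
    ext x
    simp only [mem_inter]
    constructor
    · rintro ⟨hx, hxE⟩
      refine ⟨?_, hxE⟩
      by_contra hxU
      exact disjoint_left.1 h2 (mem_sdiff.2 ⟨hx, hxU⟩) hxE
    · rintro ⟨hx, hxE⟩; exact ⟨h1 hx, hxE⟩
  rw [this, hU]

/-- good edges of a `P2`-free family -/
def Good (k w : ℕ) (F : Finset (Finset α)) (E : Finset α) : Prop :=
  (∃ u v, u ≠ v ∧ u ∈ E ∧ v ∈ E ∧ ∀ U, u ∈ U → v ∈ U → U ⊆ E → Ker w F U) ∨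
  (k = 4 ∧ ∃ e f : Finset α, e.card = 2 ∧ f.card = 2 ∧ Disjoint e f ∧ E = e ∪ f ∧
    Ker w F e ∧ Ker w F f)

lemma frankl_struct {k w : ℕ} (hk : 4 ≤ k) (hw : k ≤ w)
    (F : Finset (Finset α)) (hF : ∀ E ∈ F, E.card = k) (V : Finset α) (hV : ∀ E ∈ F, E ⊆ V)
    (hno : P2Free F) (Q : Finset (Finset α)) (hQF : Q ⊆ F) (hQ : ∀ E ∈ Q, ¬ Good k w F E) :
    Q.card ≤ KC k * (w ^ 3 * V.card ^ (k - 3)) := by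
  obtain ⟨H, χ, A, hHQ, hcard, hi, hA⟩ := hom_lemma k w (by omega) Q (fun E hE => hF E (hQF hE))
  have hHF : H ⊆ F := hHQ.trans hQF
  rcases H.eq_empty_or_nonempty with rfl | hne
  · simp at hcard; simp [hcard]
  have hc : ∀ E ∈ H, E.card = k := fun E hE => hF E (hHF hE)
  by_contra hlt
  have h0 : ∅ ∈ A := by
    obtain ⟨E, hE⟩ := hne
    rw [hA E hE]
    have : rs χ E ∅ = E := by ext; simp [mem_rs]
    rw [this]; exact Ker.of_mem hE
  have hU : ∀ S ∈ A, ∀ T ∈ A, S ∪ T ∈ A := fun S hS T hT => hom_union hc hi hA hne hS hT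
  have h3 : ∀ a b c : Fin k, a ≠ b → a ≠ c → b ≠ c →
      ∃ T ∈ A, T.Nonempty ∧ T ⊆ {a, b, c} := by
    intro a b c hab hac hbc
    by_contra hcon
    push Not at hcon
    have := hom_dense V (fun E hE => hV E (hHF hE)) hc hi hA {a, b, c}
      (fun T' hT' hT'n hT'A => hcon T' hT'A hT'n hT')
    have h3 : ({a, b, c} : Finset (Fin k)).card = 3 := card_eq_three.2 ⟨a, b, c, hab, hac, hbc, rfl⟩
    rw [h3] at this
    apply hlt
    exact hcard.trans (Nat.mul_le_mul_left _ this)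
  obtain ⟨E, hE⟩ := hne
  have h1 : ∀ p : Fin k, univ.erase p ∉ A := by
    intro p hp
    obtain ⟨v, hv, rfl⟩ := rainbow_surj (hc E hE) (hi E hE) p
    have hK := (hA E hE _).1 hp
    rw [rs_compl_singleton (hi E hE) hv] at hK
    refine hno.no_single (by omega) hF hw (hHF hE) (hK.mono hHF) ?_
    rw [inter_eq_left.2 (by simpa using hv)]; simp
  apply hQ E (hHQ hE)
  rcases comb3 hk h0 hU h1 h3 with ⟨p, q, hpq, hs⟩ | ⟨hk4, B, hB2, hB, hBc⟩
  · left
    obtain ⟨u, hu, hup⟩ := rainbow_surj (hc E hE) (hi E hE) p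
    obtain ⟨v, hv, hvq⟩ := rainbow_surj (hc E hE) (hi E hE) q
    refine ⟨u, v, ?_, hu, hv, ?_⟩
    · rintro rfl; exact hpq (hup.symm.trans hvq)
    intro U huU hvU hUE
    have hT : (E \ U).image χ ∈ A := by
      apply uc_cover h0 hU
      intro s hs'
      obtain ⟨y, hy, hys⟩ := mem_image.1 hs'
      rw [mem_sdiff] at hy
      refine ⟨{s}, hs s ?_ ?_, by simp, by simpa using hs'⟩
      · rintro rfl
        have := hi E hE hy.1 hu (hys.trans hup.symm)
        exact hy.2 (this ▸ huU)
      · rintro rfl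
        have := hi E hE hy.1 hv (hys.trans hvq.symm)
        exact hy.2 (this ▸ hvU)
    have := (hA E hE _).1 hT
    rw [rs_image (hi E hE) hUE] at this
    exact this.mono hHF
  · right
    have hcd : ∀ T : Finset (Fin k), (rs χ E T).card = Tᶜ.card := by
      intro T
      rw [← card_image_of_injOn (f := χ) (s := rs χ E T)
        ((hi E hE).mono (by exact_mod_cast rs_subset χ E T))]
      congr 1
      ext c
      simp only [mem_image, mem_rs, mem_compl]
      constructor
      · rintro ⟨x, ⟨_, h⟩, rfl⟩; exact h
      · intro h
        obtain ⟨x, hx, hxc⟩ := rainbow_surj (hc E hE) (hi E hE) c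
        exact ⟨x, ⟨hx, by rwa [hxc]⟩, hxc⟩
    refine ⟨hk4, rs χ E B, rs χ E Bᶜ, ?_, ?_, ?_, ?_, ((hA E hE _).1 hB).mono hHF,
      ((hA E hE _).1 hBc).mono hHF⟩
    · rw [hcd, card_compl, hB2]; simp [hk4]
    · rw [hcd, compl_compl, hB2]
    · rw [disjoint_left]; intro x hx hx'
      rw [mem_rs] at hx hx'
      simp at hx'
      exact hx.2 hx'.2
    · ext x
      simp only [mem_union, mem_rs, mem_compl]
      tauto

end struct


section kgraph
variable {α : Type} [DecidableEq α]

open Classical in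
lemma degen_sum (r : α → α → Prop) (hs : ∀ a b, r a b → r b a) (d : ℕ)
    (h : ∀ B : Finset α, B.Nonempty → ∃ v ∈ B, (B.filter (fun y => y ≠ v ∧ r v y)).card ≤ d) :
    ∀ B : Finset α, ∑ v ∈ B, (B.filter (fun y => y ≠ v ∧ r v y)).card ≤ 2 * d * B.card := by
  intro B
  induction B using Finset.strongInduction with
  | H B ih =>
    rcases B.eq_empty_or_nonempty with rfl | hne
    · simp
    obtain ⟨v, hv, hd⟩ := h B hne
    have h1 := ih (B.erase v) (erase_ssubset hv)
    have hc : (B.erase v).card + 1 = B.card := card_erase_add_one hv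
    rw [← add_sum_erase _ _ hv]
    have h2 : ∀ u ∈ B.erase v, (B.filter (fun y => y ≠ u ∧ r u y)).card ≤
        ((B.erase v).filter (fun y => y ≠ u ∧ r u y)).card + (if r v u then 1 else 0) := by
      intro u hu
      have hB : B = insert v (B.erase v) := (insert_erase hv).symm
      conv_lhs => rw [hB]
      rw [filter_insert]
      split_ifs with h3 h4 h4
      · exact card_insert_le _ _
      · exact absurd (hs _ _ h3.2) h4
      · omega
      · omega
    have h3 := sum_le_sum h2
    rw [sum_add_distrib, ← card_filter] at h3
    have h4 : ((B.erase v).filter (fun u => r v u)).card ≤ d := by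
      refine le_trans (card_le_card ?_) hd
      intro u hu
      simp only [mem_filter, mem_erase] at hu ⊢
      exact ⟨hu.1.2, hu.1.1, hu.2⟩
    have : 2 * d * B.card = 2 * d * (B.erase v).card + 2 * d := by rw [← hc]; ring
    omega

open Classical in
lemma kgraph_sum {k w ℓ : ℕ} (hℓ : 1 ≤ ℓ) (hw : k * ℓ + 1 ≤ w)
    (F : Finset (Finset α)) (hF : ∀ E ∈ F, E.card = k) (hno : ∀ v, ¬ Reach F ℓ v ∅)
    (B : Finset α) :
    ∑ v ∈ B, (B.filter (fun y => y ≠ v ∧ Ker w F {v, y})).card ≤ 2 * (k * ℓ) * B.card := by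
  apply degen_sum
  · intro a b h; rwa [pair_comm]
  · intro B hne
    by_contra hcon
    push Not at hcon
    have hR : ∀ m, 1 ≤ m → m ≤ ℓ → ∃ v ∈ B, Reach F m v ∅ := by
      intro m hm
      induction m, hm using Nat.le_induction with
      | base =>
        intro _
        obtain ⟨v, hv⟩ := hne
        obtain ⟨y, hy⟩ := card_pos.1 (lt_of_le_of_lt (Nat.zero_le _) (hcon v hv))
        rw [mem_filter] at hy
        obtain ⟨E, hE, h1, -⟩ := hy.2.2 ∅ (by simp)
        exact ⟨y, hy.1, Reach.one hE (by simp) (h1 (by simp))⟩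
      | succ m hm ih =>
        intro hmℓ
        obtain ⟨v, hv, hr⟩ := ih (by omega)
        have : k * m ≤ k * ℓ := Nat.mul_le_mul_left _ (by omega)
        obtain ⟨y, hy, hr'⟩ := hr.stepN (N := B.filter (fun y => y ≠ v ∧ Ker w F {v, y})) hF
          (fun y hy => (mem_filter.1 hy).2.2) (by simp) (lt_of_le_of_lt this (hcon v hv))
          (by simp; omega)
        exact ⟨y, (mem_filter.1 hy).1, hr'⟩
    obtain ⟨v, -, hv⟩ := hR ℓ hℓ le_rfl
    exact hno v hv

end kgraph


lemma pow_le_sub_pow (n c j : ℕ) : n ^ j ≤ (n - c) ^ j + j * c * n ^ (j - 1) := by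
  induction j with
  | zero => simp
  | succ j ih =>
    have h1 : n ≤ (n - c) + c := by omega
    have h2 : n * (j * c * n ^ (j - 1)) = j * c * n ^ j := by
      cases j with
      | zero => simp
      | succ j => simp only [Nat.add_sub_cancel]; ring
    have h3 : (n - c) ^ j ≤ n ^ j := Nat.pow_le_pow_left (by omega) j
    calc n ^ (j + 1) = n * n ^ j := by ring
      _ ≤ n * ((n - c) ^ j + j * c * n ^ (j - 1)) := Nat.mul_le_mul_left _ ih
      _ = n * (n - c) ^ j + j * c * n ^ j := by rw [mul_add, h2]
      _ ≤ ((n - c) + c) * (n - c) ^ j + j * c * n ^ j := by gcongr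
      _ = (n - c) ^ (j + 1) + c * (n - c) ^ j + j * c * n ^ j := by ring
      _ ≤ (n - c) ^ (j + 1) + c * n ^ j + j * c * n ^ j := by gcongr
      _ = _ := by simp only [Nat.add_sub_cancel]; ring

lemma choose_lower (n a j : ℕ) :
    n ^ j ≤ j.factorial * (n - a).choose j + j * (a + j) * n ^ (j - 1) := by
  refine (pow_le_sub_pow n (a + j) j).trans ?_
  gcongr
  rw [← Nat.descFactorial_eq_factorial_mul_choose]
  refine le_trans (Nat.pow_le_pow_left ?_ j) (Nat.pow_sub_le_descFactorial (n - a) j)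
  omega

lemma choose_upper (n j : ℕ) : j.factorial * n.choose j ≤ n ^ j := by
  rw [← Nat.descFactorial_eq_factorial_mul_choose]
  exact Nat.descFactorial_le_pow n j

lemma frankl_arith {n a σ m C : ℕ} (h7 : n ^ 2 ≤ a * σ + m ^ 2 + C * n) (h8 : σ + 2 * m ≤ n)
    (h1 : a + C < n) (h2 : 2 * C < n) : False := by
  by_cases h4 : n ≤ 4 * a
  · have e1 : a * (σ + 2 * m) ≤ a * n := Nat.mul_le_mul_left _ h8
    have e2 : m * (2 * m) ≤ m * n := Nat.mul_le_mul_left _ (by omega)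
    have e3 : m * n ≤ m * (4 * a) := Nat.mul_le_mul_left _ h4
    have e4 : (a + C) * n < n * n := Nat.mul_lt_mul_of_pos_right h1 (by omega)
    nlinarith
  · push Not at h4
    have e1 : 4 * a * σ ≤ n * n := Nat.mul_le_mul h4.le (by omega)
    have e2 : 2 * m * (2 * m) ≤ n * n := Nat.mul_le_mul (by omega) (by omega)
    have e4 : (2 * C) * n < n * n := Nat.mul_lt_mul_of_pos_right h2 (by omega)
    nlinarith

section frankl
variable {α : Type} [DecidableEq α] [Fintype α]

lemma P2Free.ker_ker {k w : ℕ} (hk : 1 ≤ k) {F : Finset (Finset α)} (hF : ∀ E ∈ F, E.card = k)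
    (h : P2Free F) (hw : k ≤ w) {U U' : Finset α} (hK : Ker w F U) (hK' : Ker w F U')
    (hUw : U.card ≤ w) (hc : (U ∩ U').card = 1) : False := by
  obtain ⟨E, hE, h1, h2⟩ := hK' U hUw
  apply h.no_single hk hF hw hE hK
  rw [← hc]
  congr 1
  ext x
  simp only [mem_inter]
  constructor
  · rintro ⟨hx, hxE⟩
    refine ⟨hx, ?_⟩
    by_contra hxU
    exact disjoint_left.1 h2 (mem_sdiff.2 ⟨hxE, hxU⟩) hx
  · rintro ⟨hx, hxE⟩; exact ⟨hx, h1 hxE⟩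

open Classical in
/-- kernel pairs -/
noncomputable def KM (w : ℕ) (F : Finset (Finset α)) (V : Finset α) : Finset (Finset α) :=
  (powersetCard 2 V).filter (fun e => Ker w F e)

open Classical in
/-- kernel extensions -/
noncomputable def KN (w : ℕ) (F : Finset (Finset α)) (V : Finset α) (e : Finset α) : Finset α :=
  V.filter (fun y => y ∉ e ∧ Ker w F (insert y e))

variable {k w : ℕ} {F : Finset (Finset α)} {V : Finset α}

lemma KN_subset (e : Finset α) : KN w F V e ⊆ V := by
  intro y hy
  simp only [KN, mem_filter] at hy
  exact hy.1

lemma KM_disj (hk : 4 ≤ k) (hF : ∀ E ∈ F, E.card = k) (h : P2Free F) (hw : k ≤ w)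
    {e f : Finset α} (he : e ∈ KM w F V) (hf : f ∈ KM w F V) (hne : e ≠ f) : Disjoint e f := by
  simp only [KM, mem_filter, mem_powersetCard] at he hf
  by_contra hd
  have h1 : 0 < (e ∩ f).card := by
    rw [card_pos, ← not_disjoint_iff_nonempty_inter]; exact hd
  have h2 : (e ∩ f).card ≠ 1 := fun hc =>
    h.ker_ker (by omega) hF hw he.2 hf.2 (by omega) hc
  have h3 : (e ∩ f).card ≤ e.card := card_le_card inter_subset_left
  apply hne
  have h4 : e ∩ f = e := eq_of_subset_of_card_le inter_subset_left (by omega)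
  have h5 : e ∩ f = f := eq_of_subset_of_card_le inter_subset_right (by omega)
  rw [← h4, h5]

lemma KN_disj (hk : 4 ≤ k) (hF : ∀ E ∈ F, E.card = k) (h : P2Free F) (hw : k ≤ w)
    {e f : Finset α} (he : e ∈ KM w F V) (hf : f ∈ KM w F V) (hne : e ≠ f) :
    Disjoint (e ∪ KN w F V e) (f ∪ KN w F V f) := by
  have hd := KM_disj hk hF h hw he hf hne
  have key : ∀ e ∈ KM w F V, ∀ f ∈ KM w F V, Disjoint e f → Disjoint e (KN w F V f) := by
    intro e he f hf hd
    rw [disjoint_left]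
    intro y hye hyf
    simp only [KM, mem_filter, mem_powersetCard] at he hf
    simp only [KN, mem_filter] at hyf
    refine h.ker_ker (by omega) hF hw he.2 hyf.2.2 (by omega) ?_
    rw [card_eq_one]
    refine ⟨y, ?_⟩
    rw [inter_comm, insert_inter_of_mem hye, disjoint_iff_inter_eq_empty.1 hd.symm]
    rfl
  rw [disjoint_union_left, disjoint_union_right, disjoint_union_right]
  refine ⟨⟨hd, key e he f hf hd⟩, (key f hf e he hd.symm).symm, ?_⟩
  rw [disjoint_left]
  intro y hye hyf
  have he' := he
  simp only [KM, mem_filter, mem_powersetCard] at he'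
  simp only [KN, mem_filter] at hye hyf
  refine h.ker_ker (by omega) hF hw hye.2.2 hyf.2.2 ?_ ?_
  · have := card_insert_le y e; omega
  · rw [card_eq_one]
    refine ⟨y, ?_⟩
    rw [← insert_inter_distrib, disjoint_iff_inter_eq_empty.1 hd]
    rfl

lemma KM_edge (hk : 4 ≤ k) (hF : ∀ E ∈ F, E.card = k) (h : P2Free F) (hw : k ≤ w)
    {e g : Finset α} (he : e ∈ KM w F V) (hg : g ∈ F) (hne : ¬ e ⊆ g) :
    Disjoint (e ∪ KN w F V e) g := by
  have he' := he
  simp only [KM, mem_filter, mem_powersetCard] at he'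
  have hd : Disjoint e g := by
    by_contra hd
    have h1 : 0 < (e ∩ g).card := by
      rw [card_pos, ← not_disjoint_iff_nonempty_inter]; exact hd
    have h2 : (e ∩ g).card ≠ 1 := fun hc =>
      h.no_single (by omega) hF hw hg he'.2 hc
    apply hne
    have h4 : e ∩ g = e := eq_of_subset_of_card_le inter_subset_left (by omega)
    exact inter_eq_left.1 h4
  rw [disjoint_union_left]
  refine ⟨hd, ?_⟩
  rw [disjoint_left]
  intro y hye hyg
  simp only [KN, mem_filter] at hye
  refine h.no_single (by omega) hF hw hg hye.2.2 ?_
  rw [insert_inter_of_mem hyg, disjoint_iff_inter_eq_empty.1 hd]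
  rfl

lemma KM_sum (hk : 4 ≤ k) (hF : ∀ E ∈ F, E.card = k) (h : P2Free F) (hw : k ≤ w) :
    ∑ e ∈ KM w F V, (KN w F V e).card + 2 * (KM w F V).card ≤ V.card := by
  have h1 : ((KM w F V).biUnion (fun e => e ∪ KN w F V e)).card ≤ V.card := by
    apply card_le_card
    rw [biUnion_subset]
    intro e he
    simp only [KM, mem_filter, mem_powersetCard] at he
    exact union_subset he.1.1 (KN_subset _)
  rw [card_biUnion (fun e he f hf hne => KN_disj hk hF h hw he hf hne)] at h1
  refine le_trans (le_of_eq ?_) h1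
  have : ∀ e ∈ KM w F V, (e ∪ KN w F V e).card = (KN w F V e).card + 2 := by
    intro e he
    simp only [KM, mem_filter, mem_powersetCard] at he
    rw [card_union_of_disjoint, he.1.2, add_comm]
    rw [disjoint_right]
    intro y hy
    simp only [KN, mem_filter] at hy
    exact hy.2.1
  rw [sum_congr rfl this, sum_add_distrib, sum_const, smul_eq_mul, mul_comm]

open Classical in
lemma frankl_count (hk : 4 ≤ k) (hF : ∀ E ∈ F, E.card = k) (hV : ∀ E ∈ F, E ⊆ V)
    (h : P2Free F) (hw : k ≤ w) :
    (k - 2).factorial * F.card ≤ ∑ e ∈ KM w F V, (KN w F V e).card ^ (k - 2) +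
      (KM w F V).card ^ 2 * V.card ^ (k - 4) +
      (k - 2).factorial * (KC k * (w ^ 3 * V.card ^ (k - 3))) := by
  set M := KM w F V with hM
  set Q := F.filter (fun E => ¬ Good k w F E) with hQ
  have hQc := frankl_struct hk hw F hF V hV h Q (filter_subset _ _) (fun E hE => (mem_filter.1 hE).2)
  set T1 := M.biUnion (fun e => (powersetCard (k - 2) (KN w F V e)).image (fun R => e ∪ R)) with hT1
  set T2 := if k = 4 then (powersetCard 2 M).image (fun p => p.biUnion id) else ∅ with hT2
  have hsub : F ⊆ T1 ∪ T2 ∪ Q := by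
    intro E hE
    by_cases hg : Good k w F E
    · rw [mem_union]; left
      have hEV := hV E hE
      rcases hg with ⟨u, v, huv, hu, hv, hK⟩ | ⟨hk4, e, f, he, hf, hd, hEf, hKe, hKf⟩
      · rw [mem_union]; left
        rw [hT1, mem_biUnion]
        have hs : {u, v} ⊆ E := by intro x; simp; rintro (rfl | rfl) <;> assumption
        refine ⟨{u, v}, ?_, ?_⟩
        · rw [hM, KM, mem_filter, mem_powersetCard]
          exact ⟨⟨hs.trans hEV, card_pair huv⟩, hK _ (by simp) (by simp) hs⟩
        · rw [mem_image]
          refine ⟨E \ {u, v}, ?_, union_sdiff_of_subset hs⟩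
          rw [mem_powersetCard]
          refine ⟨?_, by rw [card_sdiff_of_subset hs, hF E hE, card_pair huv]⟩
          intro y hy
          rw [mem_sdiff] at hy
          rw [KN, mem_filter]
          refine ⟨hEV hy.1, hy.2, hK _ (by simp) (by simp) ?_⟩
          exact insert_subset hy.1 hs
      · rw [mem_union]; right
        rw [hT2, if_pos hk4, mem_image]
        refine ⟨{e, f}, ?_, by simp [hEf]⟩
        rw [mem_powersetCard]
        constructor
        · intro x hx
          simp only [mem_insert, mem_singleton] at hx
          rw [hM, KM, mem_filter, mem_powersetCard]
          rcases hx with rfl | rfl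
          · exact ⟨⟨(hEf ▸ subset_union_left).trans hEV, he⟩, hKe⟩
          · exact ⟨⟨(hEf ▸ subset_union_right).trans hEV, hf⟩, hKf⟩
        · apply card_pair
          rintro rfl
          rw [disjoint_self] at hd
          simp at hd; subst hd; simp at he
    · rw [mem_union]; right
      exact mem_filter.2 ⟨hE, hg⟩
  have h1 : F.card ≤ T1.card + T2.card + Q.card :=
    (card_le_card hsub).trans ((card_union_le _ _).trans (by gcongr; exact card_union_le _ _))
  have h2 : (k - 2).factorial * T1.card ≤ ∑ e ∈ M, (KN w F V e).card ^ (k - 2) := by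
    calc (k - 2).factorial * T1.card
        ≤ (k - 2).factorial * ∑ e ∈ M, (KN w F V e).card.choose (k - 2) := by
          gcongr
          refine card_biUnion_le.trans (sum_le_sum fun e he => ?_)
          refine card_image_le.trans ?_
          rw [card_powersetCard]
      _ = ∑ e ∈ M, (k - 2).factorial * (KN w F V e).card.choose (k - 2) := by rw [mul_sum]
      _ ≤ _ := sum_le_sum fun e he => choose_upper _ _
  have h3 : (k - 2).factorial * T2.card ≤ M.card ^ 2 * V.card ^ (k - 4) := by
    rw [hT2]
    split_ifs with hk4
    · subst hk4
      have : ((powersetCard 2 M).image (fun p => p.biUnion id)).card ≤ M.card.choose 2 := by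
        refine card_image_le.trans ?_
        rw [card_powersetCard]
      have h5 := choose_upper M.card 2
      simp only [Nat.reduceSub, pow_zero, mul_one]
      exact le_trans (Nat.mul_le_mul_left _ this) h5
    · simp
  calc (k - 2).factorial * F.card
      ≤ (k - 2).factorial * (T1.card + T2.card + Q.card) := Nat.mul_le_mul_left _ h1
    _ = (k - 2).factorial * T1.card + (k - 2).factorial * T2.card + (k - 2).factorial * Q.card := by
        ring
    _ ≤ _ := by gcongr

/-- some kernel pair has almost everything as extensions -/
lemma frankl_big (hk : 4 ≤ k) (hF : ∀ E ∈ F, E.card = k) (hV : ∀ E ∈ F, E ⊆ V)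
    (h : P2Free F) (hw : k ≤ w) (hc : (V.card - 2).choose (k - 2) ≤ F.card) (C : ℕ)
    (hC : C = (k - 2) * (2 + (k - 2)) + (k - 2).factorial * (KC k * w ^ 3))
    (hn : 2 * C < V.card) :
    ∃ e ∈ KM w F V, V.card ≤ (KN w F V e).card + C := by
  set n := V.card with hnd
  set M := KM w F V with hM
  have h1 := frankl_count (V := V) hk hF hV h hw
  have h2 := choose_lower n 2 (k - 2)
  have h3 := KM_sum (V := V) hk hF h hw
  have hsp : n ^ (k - 2) ≤ ∑ e ∈ M, (KN w F V e).card ^ (k - 2) + M.card ^ 2 * n ^ (k - 4) +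
      C * n ^ (k - 3) := by
    have : k - 2 - 1 = k - 3 := by omega
    rw [this] at h2
    calc n ^ (k - 2) ≤ _ := h2
      _ ≤ (k - 2).factorial * F.card + (k - 2) * (2 + (k - 2)) * n ^ (k - 3) := by gcongr
      _ ≤ _ := Nat.add_le_add_right h1 _
      _ = _ := by rw [hC]; ring
  -- max
  have hn0 : 0 < n := by omega
  rcases M.eq_empty_or_nonempty with he | hne
  · exfalso
    rw [he] at hsp
    simp only [sum_empty, card_empty] at hsp
    have h4 : n ^ (k - 2) = n * n ^ (k - 3) := by rw [← pow_succ']; congr 1; omega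
    rw [h4] at hsp
    have h5 : 0 < n ^ (k - 3) := by positivity
    have : n * n ^ (k - 3) ≤ C * n ^ (k - 3) := by simpa using hsp
    have := Nat.le_of_mul_le_mul_right this h5
    omega
  obtain ⟨e, he, hmax⟩ := exists_max_image M (fun e => (KN w F V e).card) hne
  refine ⟨e, he, ?_⟩
  set a := (KN w F V e).card with ha
  have han : a ≤ n := card_le_card (KN_subset _)
  have h5 : ∑ e ∈ M, (KN w F V e).card ^ (k - 2) ≤ a * n ^ (k - 4) * ∑ e ∈ M, (KN w F V e).card := by
    rw [mul_sum]
    apply sum_le_sum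
    intro f hf
    have hfa := hmax f hf
    have : k - 2 = (k - 4) + 1 + 1 := by omega
    rw [this, pow_succ, pow_succ]
    have h6 : (KN w F V f).card ^ (k - 4) ≤ n ^ (k - 4) := Nat.pow_le_pow_left (hfa.trans han) _
    calc (KN w F V f).card ^ (k - 4) * (KN w F V f).card * (KN w F V f).card
        ≤ n ^ (k - 4) * a * (KN w F V f).card := by gcongr
      _ = _ := by ring
  set σ := ∑ e ∈ M, (KN w F V e).card with hσ
  set m := M.card with hm
  have h6 : n ^ (k - 4) * n ^ 2 ≤ n ^ (k - 4) * (a * σ + m ^ 2 + C * n) := by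
    have e1 : n ^ (k - 2) = n ^ (k - 4) * n ^ 2 := by rw [← pow_add]; congr 1; omega
    have e2 : n ^ (k - 3) = n ^ (k - 4) * n := by rw [← pow_succ]; congr 1; omega
    rw [← e1]
    calc _ ≤ _ := hsp
      _ ≤ a * n ^ (k - 4) * σ + m ^ 2 * n ^ (k - 4) + C * n ^ (k - 3) := by gcongr
      _ = _ := by rw [e2]; ring
  have h7 := Nat.le_of_mul_le_mul_left h6 (by positivity)
  have h8 : σ + 2 * m ≤ n := h3
  by_contra hcon
  push Not at hcon
  exact frankl_arith h7 h8 hcon hn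

end frankl

set_option maxHeartbeats 1000000 in
/-- Frankl's theorem for linear paths of length two (exact form, large ground set). -/
theorem frankl_exact (k : ℕ) (hk : 4 ≤ k) : ∃ n₀ : ℕ, ∀ {α : Type} [DecidableEq α] [Fintype α]
    (V : Finset α) (F : Finset (Finset α)), n₀ ≤ V.card → (∀ E ∈ F, E.card = k) →
    (∀ E ∈ F, E ⊆ V) → P2Free F → (V.card - 2).choose (k - 2) ≤ F.card →
    ∃ u ∈ V, ∃ v ∈ V, u ≠ v ∧ F = (powersetCard k V).filter (fun E => u ∈ E ∧ v ∈ E) := by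
  obtain ⟨C, hC⟩ : ∃ C, C = (k - 2) * (2 + (k - 2)) + (k - 2).factorial * (KC k * k ^ 3) := ⟨_, rfl⟩
  refine ⟨2 * C + 2 * k + (k - 3).factorial * 2 ^ C + 10, ?_⟩
  intro α _ _ V F hn hF hV hP hc
  obtain ⟨e, he, hbig⟩ := frankl_big (w := k) hk hF hV hP le_rfl hc C hC (by omega)
  clear hC
  obtain ⟨D, hD⟩ : ∃ D, D = 2 ^ C := ⟨_, rfl⟩
  rw [← hD] at hn
  have he' := he
  simp only [KM, mem_filter, mem_powersetCard] at he'
  obtain ⟨⟨heV, he2⟩, hKe⟩ := he'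
  set G := F.filter (fun g => ¬ e ⊆ g) with hG
  set St := (powersetCard k V).filter (fun E => e ⊆ E) with hSt
  have hF1 : F.filter (fun g => e ⊆ g) ⊆ St := by
    intro E hE
    rw [mem_filter] at hE
    rw [hSt, mem_filter, mem_powersetCard]
    exact ⟨⟨hV E hE.1, hF E hE.1⟩, hE.2⟩
  have hStc : St.card = (V.card - 2).choose (k - 2) := by
    have : St = (powersetCard (k - 2) (V \ e)).image (fun R => e ∪ R) := by
      ext E
      simp only [hSt, mem_filter, mem_powersetCard, mem_image]
      constructor
      · rintro ⟨⟨h1, h2⟩, h3⟩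
        exact ⟨E \ e, ⟨sdiff_subset_sdiff h1 (Subset.refl _), by
          rw [card_sdiff_of_subset h3]; omega⟩, union_sdiff_of_subset h3⟩
      · rintro ⟨R, ⟨h1, h2⟩, rfl⟩
        refine ⟨⟨union_subset heV (h1.trans sdiff_subset), ?_⟩, subset_union_left⟩
        rw [card_union_of_disjoint (disjoint_of_subset_right h1 disjoint_sdiff)]
        omega
    rw [this, card_image_of_injOn, card_powersetCard, card_sdiff_of_subset heV, he2]
    intro R hR R' hR' heq
    rw [mem_coe, mem_powersetCard] at hR hR'
    have d1 : Disjoint e R := disjoint_of_subset_right hR.1 disjoint_sdiff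
    have d2 : Disjoint e R' := disjoint_of_subset_right hR'.1 disjoint_sdiff
    have := congrArg (fun X => X \ e) heq
    simpa [union_sdiff_cancel_left d1, union_sdiff_cancel_left d2] using this
  have hsplit : (F.filter (fun g => e ⊆ g)).card + G.card = F.card :=
    card_filter_add_card_filter_not _
  have hGc : G.card ≤ D := by
    rw [hD]
    have : G ⊆ (V \ KN k F V e).powerset := by
      intro g hg
      rw [mem_filter] at hg
      have := KM_edge (V := V) hk hF hP le_rfl he hg.1 hg.2
      rw [mem_powerset]
      intro x hx
      rw [mem_sdiff]
      exact ⟨hV g hg.1 hx, fun hxN => disjoint_right.1 this hx (mem_union_right _ hxN)⟩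
    have h1 := card_le_card this
    rw [card_powerset, card_sdiff_of_subset (KN_subset _)] at h1
    refine h1.trans (Nat.pow_le_pow_right (by norm_num) ?_)
    omega
  have hGe : G = ∅ := by
    by_contra hne
    obtain ⟨g, hg⟩ := nonempty_iff_ne_empty.2 hne
    have hg' := mem_filter.1 hg
    have hdis : Disjoint e g := disjoint_of_subset_left subset_union_left
      (KM_edge (V := V) hk hF hP le_rfl he hg'.1 hg'.2)
    have hgk := hF g hg'.1
    obtain ⟨x, hx⟩ := card_pos.1 (by omega : 0 < g.card)
    set Ms := (powersetCard (k - 3) (V \ (e ∪ g))).image (fun R => e ∪ insert x R) with hMs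
    have hmem : ∀ R ∈ powersetCard (k - 3) (V \ (e ∪ g)), Disjoint R e ∧ Disjoint R g ∧ R ⊆ V ∧
        R.card = k - 3 := by
      intro R hR
      rw [mem_powersetCard] at hR
      have := disjoint_of_subset_left hR.1 (disjoint_sdiff.symm : Disjoint (V \ (e ∪ g)) (e ∪ g))
      rw [disjoint_union_right] at this
      exact ⟨this.1, this.2, hR.1.trans sdiff_subset, hR.2⟩
    have hxe : x ∉ e := disjoint_right.1 hdis hx
    have hMsub : Ms ⊆ St \ F.filter (fun g => e ⊆ g) := by
      intro E hE
      rw [hMs, mem_image] at hE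
      obtain ⟨R, hR, rfl⟩ := hE
      obtain ⟨h1, h2, h3, h4⟩ := hmem R hR
      have hxR : x ∉ R := disjoint_right.1 h2 hx
      rw [mem_sdiff, hSt, mem_filter, mem_powersetCard]
      refine ⟨⟨⟨union_subset heV (insert_subset (hV g hg'.1 hx) h3), ?_⟩, subset_union_left⟩, ?_⟩
      · rw [card_union_of_disjoint, card_insert_of_notMem hxR]
        · omega
        · rw [disjoint_insert_right]; exact ⟨hxe, h1.symm⟩
      · intro hF'
        rw [mem_filter] at hF'
        apply hP _ hF'.1 g hg'.1
        rw [card_eq_one]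
        refine ⟨x, ?_⟩
        rw [union_inter_distrib_right, disjoint_iff_inter_eq_empty.1 hdis, empty_union,
          insert_inter_of_mem hx, disjoint_iff_inter_eq_empty.1 h2]
        rfl
    have hMc : Ms.card = (V \ (e ∪ g)).card.choose (k - 3) := by
      rw [hMs, card_image_of_injOn, card_powersetCard]
      intro R hR R' hR' heq
      obtain ⟨h1, h2, h3, h4⟩ := hmem R hR
      obtain ⟨h1', h2', h3', h4'⟩ := hmem R' hR'
      have hxR : x ∉ R := disjoint_right.1 h2 hx
      have hxR' : x ∉ R' := disjoint_right.1 h2' hx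
      ext y
      have hy := congrArg (fun X => y ∈ X) heq
      simp only [mem_union, mem_insert, eq_iff_iff] at hy
      have a1 : y ∈ R → y ∉ e := fun h => disjoint_left.1 h1 h
      have a2 : y ∈ R' → y ∉ e := fun h => disjoint_left.1 h1' h
      have a3 : y ∈ R → y ≠ x := fun h h' => hxR (h' ▸ h)
      have a4 : y ∈ R' → y ≠ x := fun h h' => hxR' (h' ▸ h)
      clear * - hy a1 a2 a3 a4
      constructor
      · intro h
        exact ((hy.1 (Or.inr (Or.inr h))).resolve_left (a1 h)).resolve_left (a3 h)
      · intro h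
        exact ((hy.2 (Or.inr (Or.inr h))).resolve_left (a2 h)).resolve_left (a4 h)
    have hcm := card_le_card hMsub
    rw [card_sdiff_of_subset hF1, hMc, hStc] at hcm
    have hm : V.card ≤ (V \ (e ∪ g)).card + 2 + k := by
      have h1 := le_card_sdiff (e ∪ g) V
      have h2 := card_union_le e g
      omega
    set m := (V \ (e ∪ g)).card with hmd
    have hpow : D < m.choose (k - 3) := by
      have h1 : (m + 1 - (k - 3)) ^ (k - 3) ≤ (k - 3).factorial * m.choose (k - 3) := by
        rw [← Nat.descFactorial_eq_factorial_mul_choose]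
        exact Nat.pow_sub_le_descFactorial m (k - 3)
      have h2 : m + 1 - (k - 3) ≤ (m + 1 - (k - 3)) ^ (k - 3) := Nat.le_self_pow (by omega) _
      have h3 : (k - 3).factorial * D < (k - 3).factorial * m.choose (k - 3) := by omega
      exact Nat.lt_of_mul_lt_mul_left h3
    omega
  have hFe : F.filter (fun g => e ⊆ g) = F := by
    rw [filter_eq_self]
    intro g hg
    by_contra hcon
    have : g ∈ G := mem_filter.2 ⟨hg, hcon⟩
    rw [hGe] at this; simp at this
  rw [hFe] at hF1
  have hfin : F = St := eq_of_subset_of_card_le hF1 (by rw [hStc]; exact hc)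
  obtain ⟨u, v, huv, rfl⟩ := card_eq_two.1 he2
  refine ⟨u, heV (by simp), v, heV (by simp), huv, ?_⟩
  rw [hfin, hSt]
  apply filter_congr
  intro E _
  simp [insert_subset_iff]


section types
variable {α : Type} [DecidableEq α] [Fintype α]

/-- common neighbours -/
def VT (D : α → Finset α) (T : Finset α) : Finset α := univ.filter (fun y => ∀ x ∈ T, y ∈ D x)

lemma VT_card_sum (D : α → Finset α) (X : Finset α) (t w : ℕ)
    (hw : ∀ T ⊆ X, t < T.card → (VT D T).card ≤ w) :
    ∑ T ∈ powersetCard t X, (VT D T).card ≤ Fintype.card α + 2 ^ X.card * (2 ^ X.card * w) := by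
  set bad := (X.powerset.filter (fun T => t < T.card)).biUnion (VT D) with hbad
  have hb : bad.card ≤ 2 ^ X.card * w := by
    refine (card_biUnion_le_card_mul _ _ w ?_).trans ?_
    · intro T hT
      rw [mem_filter, mem_powerset] at hT
      exact hw T hT.1 hT.2
    · gcongr
      rw [← card_powerset]; exact card_le_card (filter_subset _ _)
  have h1 : ∀ T ∈ powersetCard t X, (VT D T).card ≤ (VT D T \ bad).card + bad.card := by
    intro T _
    have := le_card_sdiff bad (VT D T)
    omega
  have h2 : ∑ T ∈ powersetCard t X, (VT D T \ bad).card ≤ Fintype.card α := by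
    rw [← card_biUnion]
    · exact card_le_univ _
    · intro T hT T' hT' hne
      rw [mem_coe, mem_powersetCard] at hT hT'
      change Disjoint (VT D T \ bad) (VT D T' \ bad)
      rw [disjoint_left]
      intro y hy hy'
      rw [mem_sdiff] at hy hy'
      apply hy.2
      rw [hbad, mem_biUnion]
      refine ⟨T ∪ T', ?_, ?_⟩
      · rw [mem_filter, mem_powerset]
        refine ⟨union_subset hT.1 hT'.1, ?_⟩
        by_contra hcon
        push Not at hcon
        apply hne
        have e1 : T = T ∪ T' := eq_of_subset_of_card_le subset_union_left (by omega)
        have e2 : T' = T ∪ T' := eq_of_subset_of_card_le subset_union_right (by omega)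
        rw [e1, ← e2]
      · have a1 := hy.1
        have a2 := hy'.1
        simp only [VT, mem_filter, mem_univ, true_and] at a1 a2 ⊢
        intro x hx
        rcases mem_union.1 hx with h | h
        · exact a1 x h
        · exact a2 x h
  have h3 : (powersetCard t X).card ≤ 2 ^ X.card := by
    rw [← card_powerset]
    apply card_le_card
    intro T hT
    rw [mem_powersetCard] at hT
    exact mem_powerset.2 hT.1
  calc _ ≤ ∑ T ∈ powersetCard t X, ((VT D T \ bad).card + bad.card) := sum_le_sum h1
    _ = ∑ T ∈ powersetCard t X, (VT D T \ bad).card + (powersetCard t X).card * bad.card := by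
      rw [sum_add_distrib, sum_const, smul_eq_mul]
    _ ≤ _ := by gcongr

lemma typesum (D : α → Finset α) (X : Finset α) (t w p a : ℕ) (ht : 1 ≤ t) (hp : 2 ≤ p)
    (hw : ∀ T ⊆ X, t < T.card → (VT D T).card ≤ w)
    (ha : ∀ T ∈ powersetCard t X, (VT D T).card ≤ a) (han : a ≤ Fintype.card α) :
    p.factorial * ∑ x ∈ X, (D x).card.choose p ≤ (t - 1) * Fintype.card α ^ p +
      a * Fintype.card α ^ (p - 2) * (Fintype.card α + 2 ^ X.card * (2 ^ X.card * w)) +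
      p.factorial * (X.card * (2 ^ X.card * w ^ p)) := by
  set n := Fintype.card α with hn
  set P := powersetCard p (univ : Finset α) with hP
  have h1 : ∑ x ∈ X, (D x).card.choose p = ∑ R ∈ P, (X.filter (fun x => R ⊆ D x)).card := by
    have : ∀ x ∈ X, (D x).card.choose p = (P.filter (fun R => R ⊆ D x)).card := by
      intro x _
      rw [← card_powersetCard]
      congr 1
      ext R
      simp [hP, mem_powersetCard, and_comm]
    rw [sum_congr rfl this]
    simp only [card_filter]
    rw [sum_comm]
  set P1 := P.filter (fun R => (X.filter (fun x => R ⊆ D x)).card = t) with hP1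
  set P2 := P.filter (fun R => t < (X.filter (fun x => R ⊆ D x)).card) with hP2
  have h2 : ∑ R ∈ P, (X.filter (fun x => R ⊆ D x)).card ≤
      (t - 1) * n.choose p + P1.card + X.card * P2.card := by
    have : ∀ R ∈ P, (X.filter (fun x => R ⊆ D x)).card ≤ (t - 1) +
        (if (X.filter (fun x => R ⊆ D x)).card = t then 1 else 0) +
        X.card * (if t < (X.filter (fun x => R ⊆ D x)).card then 1 else 0) := by
      intro R _
      have h3 := card_le_card (filter_subset (fun x => R ⊆ D x) X)
      split_ifs <;> omega
    refine (sum_le_sum this).trans (le_of_eq ?_)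
    rw [sum_add_distrib, sum_add_distrib, sum_const, ← mul_sum, ← card_filter, ← card_filter,
      hP, card_powersetCard, card_univ, smul_eq_mul, mul_comm (n.choose p)]
  have h3 : P1 ⊆ (powersetCard t X).biUnion (fun T => powersetCard p (VT D T)) := by
    intro R hR
    rw [hP1, mem_filter, hP, mem_powersetCard] at hR
    rw [mem_biUnion]
    refine ⟨X.filter (fun x => R ⊆ D x), ?_, ?_⟩
    · rw [mem_powersetCard]; exact ⟨filter_subset _ _, hR.2⟩
    · rw [mem_powersetCard]
      refine ⟨?_, hR.1.2⟩
      intro y hy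
      simp only [VT, mem_filter, mem_univ, true_and]
      intro x hx
      exact hx.2 hy
  have h4 : P2 ⊆ (X.powerset.filter (fun T => t < T.card)).biUnion
      (fun T => powersetCard p (VT D T)) := by
    intro R hR
    rw [hP2, mem_filter, hP, mem_powersetCard] at hR
    rw [mem_biUnion]
    refine ⟨X.filter (fun x => R ⊆ D x), ?_, ?_⟩
    · rw [mem_filter, mem_powerset]; exact ⟨filter_subset _ _, hR.2⟩
    · rw [mem_powersetCard]
      refine ⟨?_, hR.1.2⟩
      intro y hy
      simp only [VT, mem_filter, mem_univ, true_and]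
      intro x hx
      exact hx.2 hy
  have h5 : p.factorial * P1.card ≤ a * n ^ (p - 2) * (n + 2 ^ X.card * (2 ^ X.card * w)) := by
    calc p.factorial * P1.card ≤ p.factorial * ∑ T ∈ powersetCard t X, (VT D T).card.choose p := by
          gcongr
          refine (card_le_card h3).trans (card_biUnion_le.trans (le_of_eq ?_))
          exact sum_congr rfl fun T _ => card_powersetCard _ _
      _ = ∑ T ∈ powersetCard t X, p.factorial * (VT D T).card.choose p := by rw [mul_sum]
      _ ≤ ∑ T ∈ powersetCard t X, a * n ^ (p - 2) * (VT D T).card := by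
          apply sum_le_sum
          intro T hT
          refine (choose_upper _ _).trans ?_
          have e : p = (p - 2) + 1 + 1 := by omega
          have h6 : (VT D T).card ^ (p - 2) ≤ n ^ (p - 2) :=
            Nat.pow_le_pow_left ((ha T hT).trans han) _
          calc (VT D T).card ^ p = (VT D T).card ^ (p - 2) * (VT D T).card * (VT D T).card := by
                conv_lhs => rw [e, pow_succ, pow_succ]
            _ ≤ n ^ (p - 2) * a * (VT D T).card := by gcongr; exact ha T hT
            _ = _ := by ring
      _ = a * n ^ (p - 2) * ∑ T ∈ powersetCard t X, (VT D T).card := by rw [mul_sum]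
      _ ≤ _ := by gcongr; exact VT_card_sum D X t w hw
  have h6 : P2.card ≤ 2 ^ X.card * w ^ p := by
    refine (card_le_card h4).trans ((card_biUnion_le_card_mul _ _ (w ^ p) ?_).trans ?_)
    · intro T hT
      rw [mem_filter, mem_powerset] at hT
      rw [card_powersetCard]
      exact (Nat.choose_le_pow _ _).trans (Nat.pow_le_pow_left (hw T hT.1 hT.2) _)
    · gcongr
      rw [← card_powerset]; exact card_le_card (filter_subset _ _)
  calc p.factorial * ∑ x ∈ X, (D x).card.choose p
      ≤ p.factorial * ((t - 1) * n.choose p + P1.card + X.card * P2.card) := by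
        rw [h1]; exact Nat.mul_le_mul_left _ h2
    _ = (t - 1) * (p.factorial * n.choose p) + p.factorial * P1.card +
        p.factorial * (X.card * P2.card) := by ring
    _ ≤ _ := by
        gcongr
        exact choose_upper _ _

end types

section z
variable {α : Type} [DecidableEq α]

/-- a further kernel vertex attached to `N` gives a long path -/
lemma z1 {k w t : ℕ} (hk : 2 ≤ k) (ht : 1 ≤ t) {F : Finset (Finset α)} (hF : ∀ E ∈ F, E.card = k)
    (hw : k * (2 * t + 2) + (2 * t + 2) + 1 ≤ w) {S N : Finset α} (hS : S.card = t)
    (hN : w < N.card) (hSN : Disjoint S N) (hK : ∀ x ∈ S, ∀ y ∈ N, Ker w F {x, y})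
    {x y : α} (hx : x ∉ S) (hy : y ∈ N) (hxy : y ≠ x) (hKx : Ker w F {x}) (hKxy : Ker w F {x, y}) :
    ∃ z, Reach F (2 * t + 2) z ∅ := by
  have hyS : y ∉ S := disjoint_right.1 hSN hy
  have hc : (insert y S).card = t + 1 := by rw [card_insert_of_notMem hyS, hS]
  have hk2 : k * 1 ≤ k * (2 * t + 2) := Nat.mul_le_mul_left _ (by omega)
  obtain ⟨E, hE, h1, h2⟩ := hKx (insert y S) (by omega)
  have hxE : x ∈ E := h1 (by simp)
  have hr : Reach F 1 x (insert y S) := by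
    refine Reach.one hE ?_ hxE
    rw [disjoint_left]
    intro z hz hzS
    by_cases hzx : z = x
    · subst hzx
      rcases mem_insert.1 hzS with h | h
      · exact hxy h.symm
      · exact hx h
    · exact disjoint_left.1 h2 (mem_sdiff.2 ⟨hz, by simpa using hzx⟩) hzS
  have hr2 := hr.step hF (mem_insert_self y S) hxy hKxy (by omega)
  rw [erase_insert hyS] at hr2
  obtain ⟨z, hz⟩ := weave hF hk N hw hN (t - 1) S (by omega) hSN hK (1 + 1) y hy hr2 (by omega)
  exact ⟨z, by convert hz using 1; omega⟩

/-- two edges off `S` meeting in one vertex, the first with a further vertex in `N` -/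
lemma z2 {k w t : ℕ} (hk : 2 ≤ k) (ht : 1 ≤ t) {F : Finset (Finset α)} (hF : ∀ E ∈ F, E.card = k)
    (hw : k * (2 * t + 2) + (2 * t + 2) + 1 ≤ w) {S N : Finset α} (hS : S.card = t)
    (hN : w < N.card) (hSN : Disjoint S N) (hK : ∀ x ∈ S, ∀ y ∈ N, Ker w F {x, y})
    {g g' : Finset α} (hg : g ∈ F) (hg' : g' ∈ F) (hgS : Disjoint g S) (hgS' : Disjoint g' S)
    (hc : (g ∩ g').card = 1) {y : α} (hy : y ∈ N) (hyg : y ∈ g) (hyg' : y ∉ g') :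
    ∃ z, Reach F (2 * t + 2) z ∅ := by
  have hr : Reach F 2 y S := by
    refine ⟨g, [g'], ?_, by simp, ?_, hyg, by simpa using hyg'⟩
    · simp [IsLP, hc]
    · simp [hg, hg', hgS, hgS']
  obtain ⟨z, hz⟩ := weave hF hk N hw hN (t - 1) S (by omega) hSN hK 2 y hy hr (by omega)
  exact ⟨z, by convert hz using 1; omega⟩

end z


lemma find_arith {p t n f F Q A B a L j1 C0 C1 C2 C3 : ℕ} (hp : 2 ≤ p) (ht : 1 ≤ t) (hn : 0 < n)
    (han : a ≤ n) (h0 : t * n ^ p ≤ f * F + C0 * n ^ (p - 1)) (h1 : F ≤ Q + (A + B))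
    (hQ : Q ≤ C1 * n ^ (p - 1)) (hA : j1 * (f * A) ≤ 2 * L * n ^ p)
    (hB : f * B ≤ (t - 1) * n ^ p + a * n ^ (p - 2) * (n + C2) + C3)
    (hbig : j1 * (C0 + f * C1 + C2 + C3) ≤ n) : j1 * (n - a) ≤ (2 * L + 1) * n := by
  obtain ⟨m, hm⟩ : ∃ m, m = n ^ (p - 1) := ⟨_, rfl⟩
  have hm0 : 0 < m := by rw [hm]; positivity
  have e1 : n ^ p = n * m := by rw [hm, ← pow_succ']; congr 1; omega
  have e2 : n ^ (p - 2) * n = m := by rw [hm, ← pow_succ]; congr 1; omega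
  have e3 : a * n ^ (p - 2) ≤ m := by
    calc a * n ^ (p - 2) ≤ n * n ^ (p - 2) := Nat.mul_le_mul_right _ han
      _ = m := by rw [← e2, mul_comm]
  rw [e1, ← hm] at h0
  rw [← hm] at hQ
  rw [e1] at hA hB
  obtain ⟨s, rfl⟩ : ∃ s, t = s + 1 := ⟨t - 1, by omega⟩
  simp only [Nat.add_sub_cancel] at hB
  have hB' : f * B ≤ s * (n * m) + a * m + m * C2 + C3 * m := by
    calc f * B ≤ _ := hB
      _ = s * (n * m) + a * (n ^ (p - 2) * n) + a * n ^ (p - 2) * C2 + C3 := by ring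
      _ ≤ s * (n * m) + a * m + m * C2 + C3 * m := by
        rw [e2]; gcongr; exact Nat.le_mul_of_pos_right _ hm0
  have h2 : j1 * ((s + 1) * (n * m)) ≤
      j1 * (f * (C1 * m)) + 2 * L * (n * m) + j1 * (s * (n * m) + a * m + m * C2 + C3 * m) +
      j1 * (C0 * m) := by
    calc j1 * ((s + 1) * (n * m)) ≤ j1 * (f * F + C0 * m) := Nat.mul_le_mul_left _ h0
      _ ≤ j1 * (f * (C1 * m + (A + B)) + C0 * m) := by gcongr; exact h1.trans (by gcongr)
      _ = j1 * (f * (C1 * m)) + j1 * (f * A) + j1 * (f * B) + j1 * (C0 * m) := by ring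
      _ ≤ _ := by gcongr
  have h3 : m * (j1 * n) ≤ m * (2 * L * n + j1 * a + j1 * (C0 + f * C1 + C2 + C3)) := by
    have : j1 * ((s + 1) * (n * m)) = j1 * (s * (n * m)) + m * (j1 * n) := by ring
    rw [this] at h2
    have h4 : j1 * (f * (C1 * m)) + 2 * L * (n * m) + j1 * (s * (n * m) + a * m + m * C2 + C3 * m) +
      j1 * (C0 * m) = j1 * (s * (n * m)) +
        m * (2 * L * n + j1 * a + j1 * (C0 + f * C1 + C2 + C3)) := by ring
    rw [h4] at h2
    omega
  have h4 := Nat.le_of_mul_le_mul_left h3 hm0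
  rw [Nat.mul_sub, add_mul]
  omega

open Classical in
theorem find_S (k t w j C0 : ℕ) (hk : 4 ≤ k) (ht : 1 ≤ t) (hj : 2 ≤ j)
    (hw : k * (2 * t + 2) + (2 * t + 2) + 1 ≤ w) :
    ∃ n₀ : ℕ, ∀ {α : Type} [DecidableEq α] [Fintype α] (F : Finset (Finset α)),
    n₀ ≤ Fintype.card α → (∀ E ∈ F, E.card = k) → (∀ v, ¬ Reach F (2 * t + 2) v ∅) →
    t * Fintype.card α ^ (k - 1) ≤ (k - 1).factorial * F.card + C0 * Fintype.card α ^ (k - 2) →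
    ∃ S N : Finset α, S.card = t ∧ Disjoint S N ∧ (∀ x ∈ S, ∀ y ∈ N, Ker w F {x, y}) ∧
      j * (Fintype.card α - N.card) ≤ Fintype.card α := by
  obtain ⟨ℓ, hℓ⟩ : ∃ ℓ, ℓ = 2 * t + 2 := ⟨_, rfl⟩
  obtain ⟨L, hL⟩ : ∃ L, L = k * ℓ := ⟨_, rfl⟩
  obtain ⟨j1, hj1⟩ : ∃ j1, j1 = j * (2 * L + 1) := ⟨_, rfl⟩
  obtain ⟨q, hq⟩ : ∃ q, q = j1 * (2 * L) := ⟨_, rfl⟩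
  obtain ⟨C1, hC1⟩ : ∃ C, C = KC k * w ^ 2 := ⟨_, rfl⟩
  obtain ⟨C2, hC2⟩ : ∃ C, C = 2 ^ q * (2 ^ q * w) := ⟨_, rfl⟩
  obtain ⟨C3, hC3⟩ : ∃ C, C = (k - 1).factorial * (q * (2 ^ q * w ^ (k - 1))) := ⟨_, rfl⟩
  refine ⟨j1 * (C0 + (k - 1).factorial * C1 + C2 + C3) + 1, ?_⟩
  intro α _ _ F hn hF hno hcard
  rw [← hℓ] at hw hno
  obtain ⟨n, hnd⟩ : ∃ n, n = Fintype.card α := ⟨_, rfl⟩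
  rw [← hnd] at hn hcard ⊢
  set D : α → Finset α := fun x => univ.filter (fun y => y ≠ x ∧ Ker w F {x, y}) with hD
  have hDm : ∀ x y, y ∈ D x ↔ y ≠ x ∧ Ker w F {x, y} := by intro x y; simp [hD]
  have hDn : ∀ x, (D x).card ≤ n := fun x => by rw [hnd]; exact card_le_univ _
  have hsum : ∑ x, (D x).card ≤ 2 * L * n := by
    have := kgraph_sum (k := k) (w := w) (ℓ := ℓ) (by omega) (by omega) F hF hno univ
    rw [card_univ, ← hnd, ← hL] at this
    exact this
  have hn0 : 0 < n := by omega
  set X := univ.filter (fun x => n ≤ j1 * (D x).card) with hX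
  have hXc : X.card ≤ q := by
    have h1 : X.card * n ≤ j1 * (2 * L) * n := by
      calc X.card * n = ∑ x ∈ X, n := by rw [sum_const, smul_eq_mul]
        _ ≤ ∑ x ∈ X, j1 * (D x).card := sum_le_sum fun x hx => (mem_filter.1 hx).2
        _ ≤ ∑ x, j1 * (D x).card := sum_le_sum_of_subset (subset_univ _)
        _ = j1 * ∑ x, (D x).card := by rw [mul_sum]
        _ ≤ j1 * (2 * L * n) := Nat.mul_le_mul_left _ hsum
        _ = _ := by ring
    rw [hq]
    exact Nat.le_of_mul_le_mul_right h1 hn0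
  set Q := F.filter (fun E => ¬ ∃ x, IsStar w F E x) with hQ
  have hQc : Q.card ≤ C1 * n ^ (k - 2) := by
    have := star_lemma (ℓ := ℓ) hk (by omega) (by omega : k * ℓ ≤ w) F hF univ
      (fun _ _ => subset_univ _) hno Q
      (filter_subset _ _) (fun E hE => (mem_filter.1 hE).2)
    rw [card_univ, ← hnd] at this
    rw [hC1, mul_assoc]; exact this
  have hcov : F ⊆ Q ∪ (univ : Finset α).biUnion
      (fun x => (powersetCard (k - 1) (D x)).image (fun R => insert x R)) := by
    intro E hE
    rw [mem_union]
    by_cases hs : ∃ x, IsStar w F E x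
    · right
      obtain ⟨x, hx, hst⟩ := hs
      rw [mem_biUnion]
      refine ⟨x, mem_univ _, ?_⟩
      rw [mem_image]
      refine ⟨E.erase x, ?_, insert_erase hx⟩
      rw [mem_powersetCard]
      refine ⟨?_, by rw [card_erase_of_mem hx, hF E hE]⟩
      intro y hy
      rw [mem_erase] at hy
      rw [hDm]
      refine ⟨hy.1, hst _ (by simp) ?_⟩
      intro z hz
      simp only [mem_insert, mem_singleton] at hz
      rcases hz with rfl | rfl
      · exact hx
      · exact hy.2
    · left; exact mem_filter.2 ⟨hE, hs⟩
  have hFc : F.card ≤ Q.card + (∑ x ∈ univ \ X, (D x).card.choose (k - 1) +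
      ∑ x ∈ X, (D x).card.choose (k - 1)) := by
    rw [sum_sdiff (subset_univ X)]
    refine (card_le_card hcov).trans ((card_union_le _ _).trans ?_)
    gcongr
    refine card_biUnion_le.trans (sum_le_sum fun x _ => ?_)
    refine card_image_le.trans (le_of_eq ?_)
    rw [card_powersetCard]
  have hA : j1 * ((k - 1).factorial * ∑ x ∈ univ \ X, (D x).card.choose (k - 1)) ≤
      2 * L * n ^ (k - 1) := by
    have e : k - 1 = (k - 3) + 1 + 1 := by omega
    have h1 : ∀ x ∈ univ \ X, j1 * ((k - 1).factorial * (D x).card.choose (k - 1)) ≤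
        n ^ (k - 2) * (D x).card := by
      intro x hx
      have hx' : j1 * (D x).card ≤ n := by
        simp only [hX, mem_sdiff, mem_univ, mem_filter, true_and, not_le] at hx
        exact hx.le
      calc j1 * ((k - 1).factorial * (D x).card.choose (k - 1))
          ≤ j1 * (D x).card ^ (k - 1) := Nat.mul_le_mul_left _ (choose_upper _ _)
        _ = (D x).card ^ (k - 3) * (j1 * (D x).card) * (D x).card := by
            conv_lhs => rw [e, pow_succ, pow_succ]
            ring
        _ ≤ n ^ (k - 3) * n * (D x).card := by
            gcongr
            exact hDn x
        _ = _ := by rw [← pow_succ]; congr 2; omega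
    calc _ = ∑ x ∈ univ \ X, j1 * ((k - 1).factorial * (D x).card.choose (k - 1)) := by
          rw [mul_sum, mul_sum]
      _ ≤ ∑ x ∈ univ \ X, n ^ (k - 2) * (D x).card := sum_le_sum h1
      _ ≤ ∑ x, n ^ (k - 2) * (D x).card := sum_le_sum_of_subset (subset_univ _)
      _ = n ^ (k - 2) * ∑ x, (D x).card := by rw [mul_sum]
      _ ≤ n ^ (k - 2) * (2 * L * n) := Nat.mul_le_mul_left _ hsum
      _ = 2 * L * (n ^ (k - 2) * n) := by ring
      _ = _ := by rw [← pow_succ]; congr 2; omega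
  have hVT : ∀ T ⊆ X, t < T.card → (VT D T).card ≤ w := by
    intro T hTX hTt
    by_contra hcon
    push Not at hcon
    obtain ⟨S', hS'T, hS'⟩ := exists_subset_card_eq (show t + 1 ≤ T.card by omega)
    obtain ⟨x, hx⟩ := card_pos.1 (by omega : 0 < S'.card)
    obtain ⟨y, hy⟩ := card_pos.1 (by omega : 0 < (VT D T).card)
    have hKN : ∀ x ∈ S', ∀ y ∈ VT D T, y ≠ x ∧ Ker w F {x, y} := by
      intro x hx y hy
      simp only [VT, mem_filter, mem_univ, true_and] at hy
      exact (hDm x y).1 (hy x (hS'T hx))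
    have hKx : Ker w F {x} := Ker.single hcon (fun y hy => (hKN x hx y hy).2)
    rw [hℓ] at hw hno
    obtain ⟨z, hz⟩ := z1 (S := S'.erase x) (by omega) ht hF hw
      (by rw [card_erase_of_mem hx]; omega) hcon
      (by
        rw [disjoint_left]; intro z hz hzN
        exact (hKN z (mem_of_mem_erase hz) z hzN).1 rfl)
      (fun x' hx' y hy => (hKN x' (mem_of_mem_erase hx') y hy).2) (notMem_erase x S') hy
      (hKN x hx y hy).1 hKx (hKN x hx y hy).2
    exact hno z hz
  set a := (powersetCard t X).sup (fun T => (VT D T).card) with ha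
  have han : a ≤ n := Finset.sup_le fun T _ => by rw [hnd]; exact card_le_univ _
  have hB := typesum D X t w (k - 1) a ht (by omega) hVT
    (fun T hT => Finset.le_sup (f := fun T => (VT D T).card) hT) (by rw [← hnd]; exact han)
  rw [← hnd] at hB
  have hB' : (k - 1).factorial * ∑ x ∈ X, (D x).card.choose (k - 1) ≤
      (t - 1) * n ^ (k - 1) + a * n ^ (k - 1 - 2) * (n + C2) + C3 := by
    refine hB.trans ?_
    have h2 : 2 ^ X.card ≤ 2 ^ q := Nat.pow_le_pow_right (by norm_num) hXc
    rw [hC2, hC3]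
    gcongr
  have hfin := find_arith (p := k - 1) (L := L) (C0 := C0) (by omega) ht hn0 han
    (by rw [show k - 1 - 1 = k - 2 by omega]; exact hcard) hFc
    (by rw [show k - 1 - 1 = k - 2 by omega]; exact hQc) hA hB' (by omega)
  rw [hj1, mul_comm j, mul_assoc] at hfin
  have hfin2 := Nat.le_of_mul_le_mul_left hfin (by omega)
  rcases (powersetCard t X).eq_empty_or_nonempty with he | hne
  · exfalso
    rw [he] at ha
    simp at ha
    rw [ha] at hfin2
    have : 2 * n ≤ j * n := Nat.mul_le_mul_right _ hj
    simp at hfin2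
    omega
  · obtain ⟨T, hT, hTa⟩ := exists_mem_eq_sup _ hne (fun T => (VT D T).card)
    have hVm : ∀ x ∈ T, ∀ y ∈ VT D T, y ≠ x ∧ Ker w F {x, y} := by
      intro x hx y hy
      simp only [VT, mem_filter, mem_univ, true_and] at hy
      exact (hDm x y).1 (hy x hx)
    refine ⟨T, VT D T, (mem_powersetCard.1 hT).2, ?_, fun x hx y hy => (hVm x hx y hy).2, ?_⟩
    · rw [disjoint_left]; intro z hz hzN
      exact (hVm z hz z hzN).1 rfl
    · rw [← hTa]; exact hfin2


section fin
variable {α : Type} [DecidableEq α] [Fintype α]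

lemma star2_card {k : ℕ} (hk : 4 ≤ k) (V : Finset α) {u v : α} (hu : u ∈ V) (hv : v ∈ V)
    (huv : u ≠ v) :
    ((powersetCard k V).filter (fun E => u ∈ E ∧ v ∈ E)).card = (V.card - 2).choose (k - 2) := by
  have heV : ({u, v} : Finset α) ⊆ V := by
    intro x hx; simp only [mem_insert, mem_singleton] at hx; rcases hx with rfl | rfl <;> assumption
  have he2 : ({u, v} : Finset α).card = 2 := card_pair huv
  have : (powersetCard k V).filter (fun E => u ∈ E ∧ v ∈ E) =
      (powersetCard (k - 2) (V \ {u, v})).image (fun R => {u, v} ∪ R) := by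
    ext E
    simp only [mem_filter, mem_powersetCard, mem_image]
    constructor
    · rintro ⟨⟨h1, h2⟩, h3⟩
      have h3' : ({u, v} : Finset α) ⊆ E := by simp [insert_subset_iff, h3]
      exact ⟨E \ {u, v}, ⟨sdiff_subset_sdiff h1 (Subset.refl _), by
        rw [card_sdiff_of_subset h3']; omega⟩, union_sdiff_of_subset h3'⟩
    · rintro ⟨R, ⟨h1, h2⟩, rfl⟩
      refine ⟨⟨union_subset heV (h1.trans sdiff_subset), ?_⟩, by simp, by simp⟩
      rw [card_union_of_disjoint (disjoint_of_subset_right h1 disjoint_sdiff)]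
      omega
  rw [this, card_image_of_injOn, card_powersetCard, card_sdiff_of_subset heV, he2]
  intro R hR R' hR' heq
  rw [mem_coe, mem_powersetCard] at hR hR'
  have d1 : Disjoint {u, v} R := disjoint_of_subset_right hR.1 disjoint_sdiff
  have d2 : Disjoint {u, v} R' := disjoint_of_subset_right hR'.1 disjoint_sdiff
  have := congrArg (fun X => X \ {u, v}) heq
  simpa only [union_sdiff_cancel_left d1, union_sdiff_cancel_left d2] using this

lemma notKer_count {k w : ℕ} (hk : 4 ≤ k) {F : Finset (Finset α)} (hF : ∀ E ∈ F, E.card = k)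
    {x y : α} (hxy : x ≠ y) (h : ¬ Ker w F {x, y}) :
    (F.filter (fun E => x ∈ E ∧ y ∈ E)).card ≤ w * Fintype.card α ^ (k - 3) := by
  unfold Ker at h
  push Not at h
  obtain ⟨W, hW, hE⟩ := h
  have hsub : F.filter (fun E => x ∈ E ∧ y ∈ E) ⊆ W.biUnion
      (fun z => (powersetCard (k - 3) (univ : Finset α)).image (fun R => {x, y, z} ∪ R)) := by
    intro E hEm
    rw [mem_filter] at hEm
    obtain ⟨hEF, hx, hy⟩ := hEm
    have hnd := hE E hEF (by simp [insert_subset_iff, hx, hy])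
    rw [not_disjoint_iff] at hnd
    obtain ⟨z, hz, hzW⟩ := hnd
    simp only [mem_sdiff, mem_insert, mem_singleton, not_or] at hz
    rw [mem_biUnion]
    refine ⟨z, hzW, ?_⟩
    rw [mem_image]
    have h3 : ({x, y, z} : Finset α) ⊆ E := by simp [insert_subset_iff, hx, hy, hz.1]
    have hc3 : ({x, y, z} : Finset α).card = 3 :=
      card_eq_three.2 ⟨x, y, z, hxy, fun h => hz.2.1 h.symm, fun h => hz.2.2 h.symm, rfl⟩
    refine ⟨E \ {x, y, z}, ?_, union_sdiff_of_subset h3⟩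
    rw [mem_powersetCard]
    exact ⟨subset_univ _, by rw [card_sdiff_of_subset h3, hF E hEF, hc3]⟩
  refine (card_le_card hsub).trans ((card_biUnion_le_card_mul _ _ (Fintype.card α ^ (k - 3)) ?_).trans
    (Nat.mul_le_mul_right _ hW))
  intro z _
  refine card_image_le.trans ?_
  rw [card_powersetCard, card_univ]
  exact Nat.choose_le_pow _ _

/-- lower bound for the number of missing sets -/
lemma missing_count {k w : ℕ} (hk : 4 ≤ k) {F M : Finset (Finset α)} (hF : ∀ E ∈ F, E.card = k)
    {S Y : Finset α} (hSY : Disjoint S Y) (hY : ∀ y ∈ Y, ∃ x ∈ S, ¬ Ker w F {x, y})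
    (hMc : ∀ E ∈ M, E.card = k)
    (hM : ∀ E : Finset α, E.card = k → ¬ Disjoint E S → E ∉ F → E ∈ M) :
    Y.card * (Fintype.card α - 2).choose (k - 2) ≤
      k * M.card + Y.card * (w * Fintype.card α ^ (k - 3)) := by
  have h1 : ∀ y ∈ Y, (Fintype.card α - 2).choose (k - 2) ≤
      (M.filter (fun E => y ∈ E)).card + w * Fintype.card α ^ (k - 3) := by
    intro y hy
    obtain ⟨x, hx, hK⟩ := hY y hy
    have hxy : x ≠ y := fun h => disjoint_left.1 hSY hx (h ▸ hy)
    have h2 := star2_card hk (univ : Finset α) (mem_univ x) (mem_univ y) hxy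
    rw [card_univ] at h2
    rw [← h2]
    have hsub : (powersetCard k (univ : Finset α)).filter (fun E => x ∈ E ∧ y ∈ E) ⊆
        M.filter (fun E => y ∈ E) ∪ F.filter (fun E => x ∈ E ∧ y ∈ E) := by
      intro E hE
      rw [mem_filter, mem_powersetCard] at hE
      obtain ⟨⟨-, hEc⟩, hxE, hyE⟩ := hE
      rw [mem_union]
      by_cases hEF : E ∈ F
      · right; exact mem_filter.2 ⟨hEF, hxE, hyE⟩
      · left; exact mem_filter.2 ⟨hM E hEc (not_disjoint_iff.2 ⟨x, hxE, hx⟩) hEF, hyE⟩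
    refine (card_le_card hsub).trans ((card_union_le _ _).trans ?_)
    gcongr
    exact notKer_count hk hF hxy hK
  have h3 := sum_le_sum h1
  rw [sum_const, smul_eq_mul, sum_add_distrib, sum_const, smul_eq_mul] at h3
  refine h3.trans ?_
  gcongr
  have : ∑ y ∈ Y, (M.filter (fun E => y ∈ E)).card = ∑ E ∈ M, (Y.filter (fun y => y ∈ E)).card := by
    simp only [card_filter]
    rw [sum_comm]
  rw [this]
  calc _ ≤ ∑ E ∈ M, k := by
        apply sum_le_sum
        intro E hE
        rw [← hMc E hE]
        apply card_le_card
        intro z hz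
        exact (mem_filter.1 hz).2
    _ = _ := by rw [sum_const, smul_eq_mul, mul_comm]

/-- a family all of whose members have all but one vertex in `Y` -/
lemma g1_count {k : ℕ} (hk : 4 ≤ k) {G : Finset (Finset α)} (hG : ∀ E ∈ G, E.card = k)
    {Y : Finset α} (hY : ∀ E ∈ G, (E \ Y).card ≤ 1) :
    G.card ≤ Fintype.card α * Y.card ^ (k - 1) := by
  have hsub : G ⊆ (univ : Finset α).biUnion
      (fun x => (powersetCard (k - 1) Y).image (fun R => insert x R)) := by
    intro E hE
    have h1 := hG E hE
    have h2 := hY E hE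
    have hex : ∃ x ∈ E, E.erase x ⊆ Y := by
      rcases (E \ Y).eq_empty_or_nonempty with he | ⟨x, hx⟩
      · obtain ⟨x, hx⟩ := card_pos.1 (by omega : 0 < E.card)
        exact ⟨x, hx, (erase_subset _ _).trans (sdiff_eq_empty_iff_subset.1 he)⟩
      · refine ⟨x, (mem_sdiff.1 hx).1, ?_⟩
        intro y hy
        rw [mem_erase] at hy
        by_contra hyY
        have : y = x := card_le_one.1 h2 y (mem_sdiff.2 ⟨hy.2, hyY⟩) x hx
        exact hy.1 this
    obtain ⟨x, hx, hxY⟩ := hex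
    rw [mem_biUnion]
    refine ⟨x, mem_univ _, ?_⟩
    rw [mem_image]
    refine ⟨E.erase x, ?_, insert_erase hx⟩
    rw [mem_powersetCard]
    exact ⟨hxY, by rw [card_erase_of_mem hx, h1]⟩
  refine (card_le_card hsub).trans ?_
  rw [← card_univ]
  apply card_biUnion_le_card_mul
  intro x _
  refine card_image_le.trans ?_
  rw [card_powersetCard]
  exact Nat.choose_le_pow _ _

open Classical in
/-- edges off `S`, general bound -/
lemma g_count {k w t : ℕ} (hk : 4 ≤ k) (ht : 1 ≤ t) {F G : Finset (Finset α)}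
    (hF : ∀ E ∈ F, E.card = k) (hw : k * (2 * t + 2) + (2 * t + 2) + 1 ≤ w)
    (hno : ∀ v, ¬ Reach F (2 * t + 2) v ∅) {S N Y : Finset α} (hS : S.card = t)
    (hN : w < N.card) (hSN : Disjoint S N) (hK : ∀ x ∈ S, ∀ y ∈ N, Ker w F {x, y})
    (hY : ∀ y, y ∈ S ∨ y ∈ N ∨ y ∈ Y) (hGF : G ⊆ F) (hGS : ∀ g ∈ G, Disjoint g S) :
    G.card ≤ KC k * (w ^ 2 * Fintype.card α ^ (k - 2)) +
      Y.card ^ (k - 2) * (2 * (k * (2 * t + 2)) * Fintype.card α) := by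
  set D : α → Finset α := fun x => univ.filter (fun y => y ≠ x ∧ Ker w F {x, y}) with hD
  have hDm : ∀ x y, y ∈ D x ↔ y ≠ x ∧ Ker w F {x, y} := by intro x y; simp [hD]
  have hsum : ∑ x, (D x).card ≤ 2 * (k * (2 * t + 2)) * Fintype.card α := by
    have := kgraph_sum (k := k) (w := w) (ℓ := 2 * t + 2) (by omega) (by omega) F hF hno univ
    rw [card_univ] at this
    exact this
  set Q := G.filter (fun E => ¬ ∃ x, IsStar w F E x) with hQ
  have hQc := star_lemma (ℓ := 2 * t + 2) hk (by omega) (by omega) F hF univ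
      (fun _ _ => subset_univ _) hno Q
      ((filter_subset _ _).trans hGF) (fun E hE => (mem_filter.1 hE).2)
  rw [card_univ] at hQc
  have hcov : G ⊆ Q ∪ (univ : Finset α).biUnion
      (fun x => (powersetCard (k - 1) (D x ∩ Y)).image (fun R => insert x R)) := by
    intro E hE
    rw [mem_union]
    by_cases hs : ∃ x, IsStar w F E x
    · right
      obtain ⟨x, hx, hst⟩ := hs
      rw [mem_biUnion]
      refine ⟨x, mem_univ _, ?_⟩
      rw [mem_image]
      refine ⟨E.erase x, ?_, insert_erase hx⟩
      rw [mem_powersetCard]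
      refine ⟨?_, by rw [card_erase_of_mem hx, hF E (hGF hE)]⟩
      intro y hy
      rw [mem_erase] at hy
      have hKxy : Ker w F {x, y} := by
        refine hst _ (by simp) ?_
        intro z hz
        simp only [mem_insert, mem_singleton] at hz
        rcases hz with rfl | rfl
        · exact hx
        · exact hy.2
      have hKx : Ker w F {x} := hst _ (by simp) (by simpa using hx)
      have hdS := hGS E hE
      rw [mem_inter, hDm]
      refine ⟨⟨hy.1, hKxy⟩, ?_⟩
      rcases hY y with h | h | h
      · exact absurd h (disjoint_left.1 hdS hy.2)
      · exfalso
        obtain ⟨z, hz⟩ := z1 (by omega) ht hF hw hS hN hSN hK (disjoint_left.1 hdS hx) h hy.1 hKx hKxy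
        exact hno z hz
      · exact h
    · left; exact mem_filter.2 ⟨hE, hs⟩
  refine (card_le_card hcov).trans ((card_union_le _ _).trans ?_)
  refine Nat.add_le_add hQc ?_
  calc _ ≤ ∑ x : α, (D x ∩ Y).card.choose (k - 1) := by
        refine card_biUnion_le.trans (sum_le_sum fun x _ => ?_)
        refine card_image_le.trans (le_of_eq ?_)
        rw [card_powersetCard]
    _ ≤ ∑ x : α, Y.card ^ (k - 2) * (D x).card := by
        apply sum_le_sum
        intro x _
        refine (Nat.choose_le_pow _ _).trans ?_
        have e : k - 1 = (k - 2) + 1 := by omega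
        rw [e, pow_succ]
        gcongr
        · exact inter_subset_right
        · exact inter_subset_left
    _ = Y.card ^ (k - 2) * ∑ x : α, (D x).card := by rw [mul_sum]
    _ ≤ _ := Nat.mul_le_mul_left _ hsum

lemma meet_card (k t : ℕ) (hk : 1 ≤ k) (S : Finset α) (hS : S.card = t) :
    ((powersetCard k (univ : Finset α)).filter (fun E => ¬ Disjoint E S)).card =
      ∑ i ∈ Icc 1 t, (Fintype.card α - i).choose (k - 1) := by
  set n := Fintype.card α with hn
  have htn : t ≤ n := by rw [← hS]; exact card_le_univ _
  have h1 : ((powersetCard k (univ : Finset α)).filter (fun E => Disjoint E S)).card =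
      (n - t).choose k := by
    have : (powersetCard k (univ : Finset α)).filter (fun E => Disjoint E S) =
        powersetCard k Sᶜ := by
      ext E
      simp only [mem_filter, mem_powersetCard, subset_univ, true_and]
      rw [subset_compl_iff_disjoint_right, and_comm]
    rw [this, card_powersetCard, card_compl, hS]
  have h2 := card_filter_add_card_filter_not (s := powersetCard k (univ : Finset α))
    (fun E => Disjoint E S)
  rw [card_powersetCard, card_univ, ← hn, h1] at h2
  have h3 : ∀ s, s ≤ n → (n - s).choose k + ∑ i ∈ Icc 1 s, (n - i).choose (k - 1) = n.choose k := by
    intro s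
    induction s with
    | zero => simp
    | succ s ih =>
      intro hs
      rw [sum_Icc_succ_top (by omega), ← ih (by omega)]
      have e1 : n - s = (n - (s + 1)) + 1 := by omega
      have e2 : k = (k - 1) + 1 := by omega
      have : (n - s).choose k = (n - (s + 1)).choose (k - 1) + (n - (s + 1)).choose k := by
        rw [e1]
        conv_lhs => rw [e2]
        rw [Nat.choose_succ_succ, Nat.succ_eq_add_one, ← e2]
      omega
  have := h3 t htn
  omega

end fin


lemma final_arith {k n y M c f w C4 K1 L j B1 B2 C5 : ℕ} (hk : 4 ≤ k)
    (h1 : y * c ≤ k * M + y * (w * n ^ (k - 3)))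
    (h2 : n ^ (k - 2) ≤ f * c + C4 * n ^ (k - 3))
    (h3 : M ≤ K1 * n ^ (k - 2) + y ^ (k - 2) * (2 * L * n))
    (h4 : M ≤ n * y ^ (k - 1)) (hj : 1 ≤ j) (h5 : j * y ≤ n)
    (hB1 : B1 = f * k) (hB2 : B2 = f * w + C4) (hC5 : C5 = 4 * B1 * K1) (hjL : 8 * B1 * L ≤ j)
    (hn1 : 2 * B2 ≤ n) (hn2 : 2 * B1 * C5 ^ (k - 1) < n) : y = 0 := by
  obtain ⟨p, hp⟩ : ∃ p, p = n ^ (k - 3) := ⟨_, rfl⟩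
  have hn0 : 0 < n := by omega
  have hp0 : 0 < p := by rw [hp]; positivity
  have e1 : n ^ (k - 2) = n * p := by rw [hp, ← pow_succ']; congr 1; omega
  have e2 : y ^ (k - 2) = y * y ^ (k - 3) := by rw [← pow_succ']; congr 1; omega
  have hnp : n ≤ p := by rw [hp]; exact Nat.le_self_pow (by omega) _
  rw [← hp] at h1 h2
  rw [e1] at h2 h3
  rw [e2] at h3
  have hyn : y ≤ n := le_trans (Nat.le_mul_of_pos_left _ (by omega)) h5
  have hb : j * y ^ (k - 3) ≤ p := by
    have a1 : y ^ (k - 3) = y * y ^ (k - 4) := by rw [← pow_succ']; congr 1; omega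
    have a2 : p = n * n ^ (k - 4) := by rw [hp, ← pow_succ']; congr 1; omega
    rw [a1, a2, ← mul_assoc]
    exact Nat.mul_le_mul h5 (Nat.pow_le_pow_left hyn _)
  generalize y ^ (k - 3) = z at *
  have ha : y * (n * p) ≤ 2 * B1 * M := by
    have g1 : y * (n * p) ≤ B1 * M + B2 * (y * p) := by
      calc y * (n * p) ≤ y * (f * c + C4 * p) := Nat.mul_le_mul_left _ h2
        _ = f * (y * c) + C4 * (y * p) := by ring
        _ ≤ f * (k * M + y * (w * p)) + C4 * (y * p) := by gcongr
        _ = _ := by rw [hB1, hB2]; ring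
    have g2 : 2 * B2 * (y * p) ≤ n * (y * p) := Nat.mul_le_mul_right _ hn1
    nlinarith
  have hy5 : y ≤ C5 := by
    have g1 : 2 * (y * (n * p)) ≤ 4 * B1 * K1 * (n * p) + y * (n * p) := by
      calc 2 * (y * (n * p)) ≤ 2 * (2 * B1 * M) := Nat.mul_le_mul_left _ ha
        _ ≤ 2 * (2 * B1 * (K1 * (n * p) + y * z * (2 * L * n))) := by gcongr
        _ = 4 * B1 * K1 * (n * p) + y * n * ((8 * B1 * L) * z) := by ring
        _ ≤ 4 * B1 * K1 * (n * p) + y * n * (j * z) := by gcongr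
        _ ≤ 4 * B1 * K1 * (n * p) + y * n * p := by gcongr
        _ = _ := by ring
    have g2 : y * (n * p) ≤ 4 * B1 * K1 * (n * p) := by omega
    rw [hC5]
    exact Nat.le_of_mul_le_mul_right g2 (by positivity)
  by_contra hy0
  have g1 : n * p ≤ n * (2 * B1 * C5 ^ (k - 1)) := by
    calc n * p ≤ y * (n * p) := Nat.le_mul_of_pos_left _ (by omega)
      _ ≤ 2 * B1 * M := ha
      _ ≤ 2 * B1 * (n * y ^ (k - 1)) := Nat.mul_le_mul_left _ h4
      _ ≤ 2 * B1 * (n * C5 ^ (k - 1)) := by gcongr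
      _ = _ := by ring
  have := Nat.le_of_mul_le_mul_left g1 hn0
  omega

lemma card_lower (k t n : ℕ) (hk : 4 ≤ k) :
    t * n ^ (k - 1) ≤ (k - 1).factorial * (∑ i ∈ Icc 1 t, (n - i).choose (k - 1)) +
      t * ((k - 1) * (t + (k - 1))) * n ^ (k - 2) := by
  have h : ∀ i ∈ Icc 1 t, n ^ (k - 1) ≤ (k - 1).factorial * (n - i).choose (k - 1) +
      (k - 1) * (t + (k - 1)) * n ^ (k - 2) := by
    intro i hi
    have := choose_lower n i (k - 1)
    rw [show k - 1 - 1 = k - 2 by omega] at this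
    refine this.trans ?_
    gcongr
    exact (mem_Icc.1 hi).2
  have h2 := sum_le_sum h
  rw [sum_const, sum_add_distrib, sum_const, ← mul_sum] at h2
  simp only [smul_eq_mul, Nat.card_Icc, Nat.add_sub_cancel] at h2
  refine h2.trans (le_of_eq ?_)
  ring

/-- Uniqueness of the extremal family for `P^{(k)}_{2t+2}`: an extremal family consists of
all k-subsets of [n] meeting a fixed t-set S, plus all k-subsets of [n]∖S containing
two fixed elements u, v ∉ S. -/
theorem turan_linear_path_even_extremal (k t : ℕ) (hk : 4 ≤ k) (ht : 1 ≤ t) :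
    ∃ n₀ : ℕ, ∀ n : ℕ, n₀ ≤ n → ∀ F : Finset (Finset (Fin n)),
      (∀ A ∈ F, A.card = k) → ¬ ContainsLinearPath k (2 * t + 2) F →
      F.card = (∑ i ∈ Finset.Icc 1 t, (n - i).choose (k - 1)) + (n - t - 2).choose (k - 2) →
      ∃ (S : Finset (Fin n)) (u v : Fin n), S.card = t ∧ u ∉ S ∧ v ∉ S ∧ u ≠ v ∧
        F = (Finset.powersetCard k Finset.univ).filter
          (fun A => (A ∩ S).Nonempty ∨ (A ∩ S = ∅ ∧ u ∈ A ∧ v ∈ A)) := by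
  classical
  obtain ⟨w, hwd⟩ : ∃ w, w = k * (2 * t + 2) + (2 * t + 2) + 1 := ⟨_, rfl⟩
  have hw := hwd.ge
  clear hwd
  obtain ⟨B1, hB1⟩ : ∃ B, B = (k - 2).factorial * k := ⟨_, rfl⟩
  obtain ⟨C4, hC4⟩ : ∃ C, C = (k - 2) * (2 + (k - 2)) := ⟨_, rfl⟩
  obtain ⟨B2, hB2⟩ : ∃ B, B = (k - 2).factorial * w + C4 := ⟨_, rfl⟩
  obtain ⟨K1, hK1⟩ : ∃ K, K = KC k * w ^ 2 := ⟨_, rfl⟩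
  obtain ⟨C5, hC5⟩ : ∃ C, C = 4 * B1 * K1 := ⟨_, rfl⟩
  obtain ⟨L, hL⟩ : ∃ L, L = k * (2 * t + 2) := ⟨_, rfl⟩
  obtain ⟨j, hj⟩ : ∃ j, j = 8 * B1 * L + 2 := ⟨_, rfl⟩
  obtain ⟨C0, hC0⟩ : ∃ C, C = t * ((k - 1) * (t + (k - 1))) := ⟨_, rfl⟩
  obtain ⟨n1, hfind⟩ := find_S k t w j C0 hk ht (by omega) hw
  obtain ⟨n2, hfr⟩ := frankl_exact k hk
  obtain ⟨C6, hC6⟩ : ∃ C, C = 2 * B1 * C5 ^ (k - 1) := ⟨_, rfl⟩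
  refine ⟨n1 + n2 + t + 2 * B2 + C6 + 2 * w + 10, ?_⟩
  intro n hn F hF hnoP hcard
  have hno : ∀ v, ¬ Reach F (2 * t + 2) v ∅ := fun v hv => hnoP (hv.toPath (by omega) hF)
  obtain ⟨S, N0, hS, hSN0, hKN0, hN0⟩ := hfind F (by simp; omega) hF hno (by
    simp only [Fintype.card_fin]
    refine (card_lower k t n hk).trans ?_
    rw [← hC0, hcard]
    gcongr
    omega)
  rw [Fintype.card_fin] at hN0
  set N := univ.filter (fun y => y ∉ S ∧ ∀ x ∈ S, Ker w F {x, y}) with hNdef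
  have hN0N : N0 ⊆ N := by
    intro y hy
    rw [hNdef, mem_filter]
    exact ⟨mem_univ _, disjoint_right.1 hSN0 hy, fun x hx => hKN0 x hx y hy⟩
  have hN0c := card_le_card hN0N
  have hSN : Disjoint S N := by
    rw [disjoint_right]; intro y hy
    rw [hNdef, mem_filter] at hy
    exact hy.2.1
  have hKN : ∀ x ∈ S, ∀ y ∈ N, Ker w F {x, y} := by
    intro x hx y hy
    rw [hNdef, mem_filter] at hy
    exact hy.2.2 x hx
  have hNw : w < N.card := by
    have : 2 * (n - N0.card) ≤ j * (n - N0.card) := Nat.mul_le_mul_right _ (by omega)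
    omega
  set Y := (univ \ S) \ N with hYdef
  have hYc : j * Y.card ≤ n := by
    refine le_trans (Nat.mul_le_mul_left _ ?_) hN0
    have h1 : Y ⊆ univ \ N0 := by
      intro y hy
      rw [hYdef, mem_sdiff] at hy
      rw [mem_sdiff]
      exact ⟨mem_univ _, fun h => hy.2 (hN0N h)⟩
    have h2 := card_le_card h1
    rw [card_univ_sdiff, Fintype.card_fin] at h2
    exact h2
  have hYall : ∀ y, y ∈ S ∨ y ∈ N ∨ y ∈ Y := by
    intro y
    by_cases h1 : y ∈ S
    · left; exact h1
    by_cases h2 : y ∈ N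
    · right; left; exact h2
    · right; right
      rw [hYdef, mem_sdiff, mem_sdiff]
      exact ⟨⟨mem_univ _, h1⟩, h2⟩
  set Meet := (powersetCard k (univ : Finset (Fin n))).filter (fun E => ¬ Disjoint E S) with hMeet
  have hMeetc := meet_card (α := Fin n) k t (by omega) S hS
  rw [Fintype.card_fin, ← hMeet] at hMeetc
  set M := Meet \ F with hMdef
  set G := F.filter (fun E => Disjoint E S) with hGdef
  have hFM : F.filter (fun E => ¬ Disjoint E S) = Meet ∩ F := by
    ext E
    simp only [hMeet, mem_filter, mem_inter, mem_powersetCard, subset_univ, true_and]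
    constructor
    · rintro ⟨h1, h2⟩; exact ⟨⟨hF E h1, h2⟩, h1⟩
    · rintro ⟨⟨h1, h2⟩, h3⟩; exact ⟨h3, h2⟩
  have hc1 : G.card + (Meet ∩ F).card = F.card := by
    rw [← hFM]; exact card_filter_add_card_filter_not _
  have hc2 : M.card + (Meet ∩ F).card = Meet.card := card_sdiff_add_card_inter _ _
  have hGM : G.card = M.card + (n - t - 2).choose (k - 2) := by omega
  -- split of `G`
  set G0 := G.filter (fun g => 2 ≤ (g ∩ N).card) with hG0
  set G1 := G.filter (fun g => ¬ 2 ≤ (g ∩ N).card) with hG1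
  have hGs : G0.card + G1.card = G.card := card_filter_add_card_filter_not _
  have hG0F : ∀ g ∈ G0, g ∈ F ∧ Disjoint g S ∧ 2 ≤ (g ∩ N).card := by
    intro g hg
    rw [hG0, mem_filter, hGdef, mem_filter] at hg
    exact ⟨hg.1.1, hg.1.2, hg.2⟩
  have hP : P2Free G0 := by
    intro g hg g' hg' hc
    obtain ⟨a1, a2, a3⟩ := hG0F g hg
    obtain ⟨b1, b2, b3⟩ := hG0F g' hg'
    have : ∃ y ∈ g ∩ N, y ∉ g ∩ g' := exists_mem_notMem_of_card_lt_card (by omega)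
    obtain ⟨y, hy, hy'⟩ := this
    rw [mem_inter] at hy
    have hyg' : y ∉ g' := fun h => hy' (mem_inter.2 ⟨hy.1, h⟩)
    obtain ⟨z, hz⟩ := z2 (by omega) ht hF hw hS hNw hSN hKN a1 b1 a2 b2 hc hy.2 hy.1 hyg'
    exact hno z hz
  have hVc : (univ \ S).card = n - t := by rw [card_univ_sdiff, Fintype.card_fin, hS]
  have hfrank : (n - t - 2).choose (k - 2) ≤ G0.card → ∃ u ∈ univ \ S, ∃ v ∈ univ \ S, u ≠ v ∧
      G0 = (powersetCard k (univ \ S)).filter (fun E => u ∈ E ∧ v ∈ E) := by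
    intro hle
    refine hfr (univ \ S) G0 (by rw [hVc]; omega) (fun E hE => hF E (hG0F E hE).1) ?_ hP
      (by rw [hVc]; exact hle)
    intro E hE
    have := (hG0F E hE).2.1
    intro x hx
    rw [mem_sdiff]
    exact ⟨mem_univ _, disjoint_left.1 this hx⟩
  have hG0c : G0.card ≤ (n - t - 2).choose (k - 2) := by
    by_contra hcon
    push Not at hcon
    obtain ⟨u, hu, v, hv, huv, heq⟩ := hfrank hcon.le
    have := star2_card hk (univ \ S) hu hv huv
    rw [← heq, hVc] at this
    omega
  have hMG1 : M.card ≤ G1.card := by omega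
  have hG1a : G1.card ≤ K1 * n ^ (k - 2) + Y.card ^ (k - 2) * (2 * L * n) := by
    have := g_count (G := G1) (Y := Y) hk ht hF hw hno hS hNw hSN hKN hYall
      ((filter_subset _ _).trans (filter_subset _ _))
      (fun g hg => (mem_filter.1 (mem_filter.1 hg).1).2)
    rw [Fintype.card_fin, ← hL] at this
    rw [hK1, mul_assoc]
    exact this
  have hG1b : G1.card ≤ n * Y.card ^ (k - 1) := by
    have := g1_count (G := G1) (Y := Y) hk
      (fun g hg => hF g (mem_filter.1 (mem_filter.1 hg).1).1) (by
      intro g hg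
      rw [hG1, mem_filter, hGdef, mem_filter] at hg
      have hs : g \ Y ⊆ g ∩ N := by
        intro x hx
        rw [mem_sdiff] at hx
        rw [mem_inter]
        refine ⟨hx.1, ?_⟩
        rcases hYall x with h | h | h
        · exact absurd h (disjoint_left.1 hg.1.2 hx.1)
        · exact h
        · exact absurd h hx.2
      have := card_le_card hs
      omega)
    rwa [Fintype.card_fin] at this
  have hmiss := missing_count (w := w) (M := M) (S := S) (Y := Y) hk hF (by
      rw [disjoint_left]; intro x hx hxY
      rw [hYdef, mem_sdiff, mem_sdiff] at hxY
      exact hxY.1.2 hx) (by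
      intro y hy
      rw [hYdef, mem_sdiff, mem_sdiff, hNdef, mem_filter] at hy
      by_contra hcon
      push Not at hcon
      exact hy.2 ⟨mem_univ _, hy.1.2, hcon⟩) (by
      intro E hE
      rw [hMdef, mem_sdiff, hMeet, mem_filter, mem_powersetCard] at hE
      exact hE.1.1.2) (by
      intro E h1 h2 h3
      rw [hMdef, mem_sdiff, hMeet, mem_filter, mem_powersetCard]
      exact ⟨⟨⟨subset_univ _, h1⟩, h2⟩, h3⟩)
  rw [Fintype.card_fin] at hmiss
  have hlow := choose_lower n 2 (k - 2)
  rw [show k - 2 - 1 = k - 3 by omega, ← hC4] at hlow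
  have hY0 : Y.card = 0 := final_arith (L := L) (j := j) hk hmiss hlow (hMG1.trans hG1a)
    (hMG1.trans hG1b) (by omega) hYc hB1 hB2 hC5 (by omega) (by omega) (by omega)
  rw [hY0, zero_pow (by omega), mul_zero] at hG1b
  have hM0 : M = ∅ := card_eq_zero.1 (by omega)
  have hG10 : G1 = ∅ := card_eq_zero.1 (by omega)
  have hG1c : G1.card = 0 := by rw [hG10, card_empty]
  have hle0 : G.card ≤ G0.card := by omega
  have hG0G : G0 = G := eq_of_subset_of_card_le (filter_subset _ _) hle0
  obtain ⟨u, hu, v, hv, huv, heq⟩ := hfrank (by omega)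
  rw [hG0G] at heq
  refine ⟨S, u, v, hS, (mem_sdiff.1 hu).2, (mem_sdiff.1 hv).2, huv, ?_⟩
  have hGm : ∀ E, E ∈ G ↔ (E ⊆ univ \ S ∧ E.card = k) ∧ u ∈ E ∧ v ∈ E := by
    intro E; rw [heq, mem_filter, mem_powersetCard]
  ext E
  rw [mem_filter, mem_powersetCard]
  constructor
  · intro hE
    refine ⟨⟨subset_univ _, hF E hE⟩, ?_⟩
    by_cases hd : Disjoint E S
    · right
      have : E ∈ G := mem_filter.2 ⟨hE, hd⟩
      exact ⟨disjoint_iff_inter_eq_empty.1 hd, ((hGm E).1 this).2⟩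
    · left
      rwa [not_disjoint_iff_nonempty_inter] at hd
  · rintro ⟨⟨-, hEc⟩, h | ⟨h1, h2⟩⟩
    · by_contra hEF
      have : E ∈ M := by
        rw [hMdef, mem_sdiff, hMeet, mem_filter, mem_powersetCard]
        exact ⟨⟨⟨subset_univ _, hEc⟩, not_disjoint_iff_nonempty_inter.2 h⟩, hEF⟩
      rw [hM0] at this
      simp at this
    · have : E ∈ G := by
        rw [hGm]
        refine ⟨⟨?_, hEc⟩, h2⟩
        intro x hx
        rw [mem_sdiff]
        exact ⟨mem_univ _, disjoint_left.1 (disjoint_iff_inter_eq_empty.2 h1) hx⟩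
      exact (mem_filter.1 this).1
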